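/- arXiv:1007.3118 — 2 statements merged into one kernel-verified Lean document; each statement's English description precedes it below -/
import Mathlib

section
/- Let g be a finite-dimensional real Lie algebra and let Dg be the differential graded Lie algebra defined as the semidirect sum of g with the free graded Lie algebra on S⁺g, with differential determined by d l(x)=0 and d i(x)=[i(x),i(x)]/2+l(x). Then Dg is acyclic as a cochain complex, i.e. all of its cohomology groups vanish. -/
noncomputable section

/-- A differential graded Lie algebra (DGLA) over `ℝ`: a `ℤ`-graded real vector space with a
degree-0 graded Lie bracket and a degree `+1` differential which is a graded derivation
of the bracket. -/
structure DGLA where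
  carrier : Type
  [acg : AddCommGroup carrier]
  [mod : Module ℝ carrier]
  grade : ℤ → Submodule ℝ carrier
  isInternal : DirectSum.IsInternal grade
  bracket : carrier →ₗ[ℝ] carrier →ₗ[ℝ] carrier
  d : carrier →ₗ[ℝ] carrier
  bracket_grade : ∀ (i j : ℤ), ∀ a ∈ grade i, ∀ b ∈ grade j, bracket a b ∈ grade (i + j)
  d_grade : ∀ (i : ℤ), ∀ a ∈ grade i, d a ∈ grade (i + 1)
  d_sq : ∀ a, d (d a) = 0
  antisymm : ∀ (i j : ℤ), ∀ a ∈ grade i, ∀ b ∈ grade j,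
    bracket a b = -((-1 : ℝ) ^ (i * j)) • bracket b a
  jacobi : ∀ (i j : ℤ), ∀ a ∈ grade i, ∀ b ∈ grade j, ∀ c,
    bracket a (bracket b c)
      = bracket (bracket a b) c + ((-1 : ℝ) ^ (i * j)) • bracket b (bracket a c)
  leibniz : ∀ (i : ℤ), ∀ a ∈ grade i, ∀ b,
    d (bracket a b) = bracket (d a) b + ((-1 : ℝ) ^ i) • bracket a (d b)

attribute [instance] DGLA.acg DGLA.mod

namespace DGLA

/-- Closed elements of degree `n`. -/
def closed (D : DGLA) (n : ℤ) : Submodule ℝ D.carrier := D.grade n ⊓ LinearMap.ker D.d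

/-- Exact elements of degree `n`. -/
def exact (D : DGLA) (n : ℤ) : Submodule ℝ D.carrier :=
  D.grade n ⊓ Submodule.map D.d (D.grade (n - 1))

/-- A DGLA is acyclic when every closed element is exact, i.e. all cohomology vanishes. -/
def IsAcyclic (D : DGLA) : Prop := ∀ n : ℤ, D.closed n ≤ D.exact n

/-- The smallest subspace containing `S` and stable under the bracket. -/
def lieSpan (D : DGLA) (S : Set D.carrier) : Submodule ℝ D.carrier :=
  sInf {p : Submodule ℝ D.carrier | S ⊆ p ∧ ∀ a ∈ p, ∀ b ∈ p, D.bracket a b ∈ p}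

end DGLA
/-- A presentation of the DGLA `Dg = g ⋉ 𝓛(S⁺g)` attached to a Lie algebra `g`:
`l x` are the degree-0 generators, and for `k : ℕ` the symmetric multilinear map
`J k` encodes the generators `𝓘(u)` for `u ∈ S^(k+1) g` (of degree `1 - 2(k+1)`),
via `J k (x, …, x) = 𝓘(x^(k+1))`.  The differential satisfies `d l(x) = 0` and
`d i(x) = [i(x), i(x)]/2 + l(x)` for the generating function `i(x) = ∑ₖ 𝓘(xᵏ)`.
The fields `generates` and `free` express that `𝓛(S⁺g)` is the free graded Lie
algebra on `S⁺g` and that `Dg` is the corresponding semidirect sum. -/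
structure DgPresentation (g : Type) [LieRing g] [LieAlgebra ℝ g] (D : DGLA) where
  l : g →ₗ[ℝ] D.carrier
  J : (k : ℕ) → MultilinearMap ℝ (fun _ : Fin (k + 1) => g) D.carrier
  J_symm : ∀ (k : ℕ) (v : Fin (k + 1) → g) (σ : Equiv.Perm (Fin (k + 1))),
    J k (v ∘ σ) = J k v
  l_grade : ∀ x, l x ∈ D.grade 0
  J_grade : ∀ (k : ℕ) (v : Fin (k + 1) → g), J k v ∈ D.grade (1 - 2 * ((k : ℤ) + 1))
  bracket_ll : ∀ x y, D.bracket (l x) (l y) = l ⁅x, y⁆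
  bracket_lJ : ∀ (k : ℕ) (x : g) (v : Fin (k + 1) → g),
    D.bracket (l x) (J k v) = ∑ j : Fin (k + 1), J k (Function.update v j ⁅x, v j⁆)
  d_l : ∀ x, D.d (l x) = 0
  d_J_one : ∀ x : g, D.d (J 0 (fun _ => x)) = l x
  d_J : ∀ (k : ℕ) (x : g),
    D.d (J (k + 1) (fun _ => x)) =
      (1 / 2 : ℝ) • ∑ s ∈ Finset.range (k + 1),
        D.bracket (J s (fun _ => x)) (J (k - s) (fun _ => x))
  generates :
    D.lieSpan (Set.range l ∪ {a | ∃ (k : ℕ) (v : Fin (k + 1) → g), a = J k v}) = ⊤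
  free : ∀ (B : DGLA) (l' : g →ₗ[ℝ] B.carrier)
      (J' : (k : ℕ) → MultilinearMap ℝ (fun _ : Fin (k + 1) => g) B.carrier),
      (∀ (k : ℕ) (v : Fin (k + 1) → g) (σ : Equiv.Perm (Fin (k + 1))), J' k (v ∘ σ) = J' k v) →
      (∀ x, l' x ∈ B.grade 0) →
      (∀ (k : ℕ) (v : Fin (k + 1) → g), J' k v ∈ B.grade (1 - 2 * ((k : ℤ) + 1))) →
      (∀ x y, B.bracket (l' x) (l' y) = l' ⁅x, y⁆) →
      (∀ (k : ℕ) (x : g) (v : Fin (k + 1) → g),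
        B.bracket (l' x) (J' k v) = ∑ j : Fin (k + 1), J' k (Function.update v j ⁅x, v j⁆)) →
      ∃! φ : D.carrier →ₗ[ℝ] B.carrier,
        (∀ a b, φ (D.bracket a b) = B.bracket (φ a) (φ b)) ∧
        (∀ (n : ℤ), ∀ a ∈ D.grade n, φ a ∈ B.grade n) ∧
        (∀ x, φ (l x) = l' x) ∧
        (∀ (k : ℕ) (v : Fin (k + 1) → g), φ (J k v) = J' k v)

/-!
The algebra `Dg = D` acts on `D ⊕ g ⊕ ℝ`: by the adjoint action on `D`, by
`𝓘(u) • x = (k + 2) 𝓘(ux)` for `u ∈ S^(k+1) g` and `x ∈ g`, and by `𝓘(y) • 1 = y`. The operator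
`∂ (c + x + t) = d c - 𝓘(x)` does not make this a differential module: `b ∈ Dg` of degree `j` has a
defect `∂ b - (-1)^j b ∂ - d b`. Give `𝓘(Sⁿ g)` weight `n` and `l(g)` weight `0`. For `b` of weight
`n` the defect is `1 ↦ (-1)^j n b` modulo operators of lower weight; on generators this follows by
differentiating the formula for `d 𝓘(yᵏ)` in `y`, and it passes to brackets because the defect is a
twisted derivation. Evaluating at `1 ∈ ℝ`, the map `h b = (-1)^j b • 1`, projected to `D`, satisfies
`d h + h d = n` on weight `n ≥ 2` modulo lower weight. Hence every cocycle is cohomologous to some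
`l x + 𝓘(y)`, and such a cocycle is `l x = d 𝓘(x)` because `d 𝓘(y) = l y` and `l` is injective.
-/

/-! ### Polarization of symmetric multilinear maps -/

section MultilinearDerivative

variable {ι E V : Type*} [AddCommGroup E] [Module ℝ E] [AddCommGroup V] [Module ℝ V]

-- `V` carries no topology, so identities between polynomials with values in `V` are differentiated
-- after pairing with linear functionals.
theorem hasDerivAt_dual_comp_diag [Fintype ι] [DecidableEq ι] (φ : Module.Dual ℝ V)
    (f : MultilinearMap ℝ (fun _ : ι => E) V) (y x : E) :
    HasDerivAt (fun t : ℝ => φ (f fun _ => y + t • x))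
      (φ (f.linearDeriv (fun _ => y) fun _ => x)) 0 := by
  have taylor (t : ℝ) : φ (f fun _ => y + t • x) =
      φ (f fun _ => y) + t * φ (f.linearDeriv (fun _ => y) fun _ => x) +
        ∑ s : Finset ι with 2 ≤ s.card,
          t ^ s.card * φ (f (s.piecewise (fun _ => x) fun _ => y)) := by
    have h := f.map_add_eq_map_add_linearDeriv_add (fun _ => y) (t • fun _ => x)
    have hs (s : Finset ι) : f (s.piecewise (t • fun _ => x) fun _ => y) =
        t ^ s.card • f (s.piecewise (fun _ => x) fun _ => y) := by
      rw [← Finset.prod_const, ← f.map_piecewise_smul]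
      congr 1
      ext i
      by_cases hi : i ∈ s <;> simp [hi]
    change φ (f ((fun _ => y) + t • fun _ => x)) = _
    simp only [h, map_add, map_smul, map_sum, hs, smul_eq_mul]
  simp only [taylor]
  have h : HasDerivAt (fun t : ℝ =>
      ∑ s : Finset ι with 2 ≤ s.card, t ^ s.card * φ (f (s.piecewise (fun _ => x) fun _ => y)))
      (∑ s : Finset ι with 2 ≤ s.card, 0) 0 := by
    refine HasDerivAt.fun_sum fun s hs => ?_
    have hs : s.card - 1 ≠ 0 := by grind
    simpa [hs] using (hasDerivAt_pow s.card (0 : ℝ)).mul_const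
      (φ (f (s.piecewise (fun _ => x) fun _ => y)))
  simpa only [one_mul, Finset.sum_const_zero, add_zero] using
    (((hasDerivAt_id' (0 : ℝ)).mul_const _).const_add _).fun_add h

theorem linearDeriv_diag_mem [Fintype ι] [DecidableEq ι]
    (f : MultilinearMap ℝ (fun _ : ι => E) V) {P : Submodule ℝ V}
    (hf : ∀ y, f (fun _ => y) ∈ P) (y x : E) : f.linearDeriv (fun _ => y) (fun _ => x) ∈ P := by
  rw [← Submodule.Quotient.mk_eq_zero, ← Module.forall_dual_apply_eq_zero_iff ℝ]
  intro φ
  have hφ := hasDerivAt_dual_comp_diag (φ ∘ₗ P.mkQ) f y x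
  have h0 (t : ℝ) : (φ ∘ₗ P.mkQ) (f fun _ => y + t • x) = 0 := by
    simp [(Submodule.Quotient.mk_eq_zero P).2 (hf _)]
  simp only [h0] at hφ
  exact hφ.unique (hasDerivAt_const _ _)

/-- A multilinear map, all of whose arguments range over the same module, is symmetric if it is
invariant under permutations of the arguments. -/
def IsSymmetricMultilinear (f : MultilinearMap ℝ (fun _ : ι => E) V) : Prop :=
  ∀ (v : ι → E) (σ : Equiv.Perm ι), f (v ∘ σ) = f v

theorem IsSymmetricMultilinear.apply_snoc_comp {n : ℕ}
    {f : MultilinearMap ℝ (fun _ : Fin (n + 1) => E) V}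
    (hf : IsSymmetricMultilinear f) (v : Fin n → E) (x : E) (σ : Equiv.Perm (Fin n)) :
    f (Fin.snoc (v ∘ σ) x) = f (Fin.snoc v x) := by
  have h : (Fin.snoc (v ∘ σ) x : Fin (n + 1) → E) =
      (Fin.snoc v x : Fin (n + 1) → E) ∘ finSuccEquivLast.symm.permCongr (σ.optionCongr) := by
    ext i
    induction i using Fin.lastCases <;> simp [Equiv.permCongr_apply]
  rw [h, hf]

theorem IsSymmetricMultilinear.linearDeriv_diag {n : ℕ}
    {f : MultilinearMap ℝ (fun _ : Fin (n + 1) => E) V}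
    (hf : IsSymmetricMultilinear f) (y x : E) :
    f.linearDeriv (fun _ => y) (fun _ => x) =
      ((n : ℝ) + 1) • f (Fin.snoc (fun _ => y) x) := by
  have h (i : Fin (n + 1)) :
      f (Function.update (fun _ => y) i x) = f (Fin.snoc (fun _ => y) x) := by
    rw [← hf _ (Equiv.swap i (Fin.last n))]
    congr 1
    ext j
    simp only [Function.comp_apply, Function.update_apply, Fin.snoc, Equiv.swap_apply_def]
    grind
  simp [MultilinearMap.linearDeriv_apply, h, ← Nat.cast_smul_eq_nsmul ℝ]

theorem IsSymmetricMultilinear.mem_of_forall_diag_mem {n : ℕ}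
    {f : MultilinearMap ℝ (fun _ : Fin n => E) V} (hf : IsSymmetricMultilinear f)
    {P : Submodule ℝ V} (hP : ∀ y, f (fun _ => y) ∈ P) (v : Fin n → E) : f v ∈ P := by
  induction n with
  | zero => exact Subsingleton.elim (fun _ => 0) v ▸ hP 0
  | succ n ih =>
    rw [← Fin.snoc_init_self v]
    refine ih (f := (LinearMap.applyₗ (v (Fin.last n))).compMultilinearMap f.curryRight)
      (fun w σ => hf.apply_snoc_comp w _ σ) (fun y => ?_) (Fin.init v)
    have h := linearDeriv_diag_mem f hP y (v (Fin.last n))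
    rw [hf.linearDeriv_diag] at h
    exact (P.smul_mem_iff (by positivity)).1 h

theorem hasDerivAt_dual_bilinear_diag {ι₁ ι₂ U₁ U₂ : Type*} [Fintype ι₁] [Fintype ι₂]
    [DecidableEq ι₁] [DecidableEq ι₂]
    [AddCommGroup U₁] [Module ℝ U₁] [AddCommGroup U₂] [Module ℝ U₂] (B : U₁ →ₗ[ℝ] U₂ →ₗ[ℝ] V)
    (f₁ : MultilinearMap ℝ (fun _ : ι₁ => E) U₁) (f₂ : MultilinearMap ℝ (fun _ : ι₂ => E) U₂)
    (φ : Module.Dual ℝ V) (y x : E) :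
    HasDerivAt (fun t : ℝ => φ (B (f₁ fun _ => y + t • x) (f₂ fun _ => y + t • x)))
      (φ (B (f₁.linearDeriv (fun _ => y) fun _ => x) (f₂ fun _ => y) +
        B (f₁ fun _ => y) (f₂.linearDeriv (fun _ => y) fun _ => x))) 0 := by
  have h := hasDerivAt_dual_comp_diag φ
    ((TensorProduct.lift B).compMultilinearMap (f₁.domCoprod f₂)) y x
  simpa [MultilinearMap.linearDeriv_apply, Function.comp_def] using h

end MultilinearDerivative

theorem sum_range_sub_swap {M : Type*} [AddCommMonoid M] (f : ℕ → ℕ → M) (k : ℕ) :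
    ∑ s ∈ Finset.range (k + 1), f (k - s) s = ∑ s ∈ Finset.range (k + 1), f s (k - s) := by
  rw [← Finset.Nat.sum_antidiagonal_eq_sum_range_succ f,
    ← Finset.Nat.sum_antidiagonal_eq_sum_range_succ fun i j => f j i,
    ← Finset.sum_equiv (Equiv.prodComm ℕ ℕ)]
  · simp [add_comm]
  · simp

/-! ### Graded commutators -/

section GradedCommutator

variable {A : Type} [Ring A] [Algebra ℝ A]

theorem neg_one_zpow_add (i j : ℤ) : (-1 : ℝ) ^ (i + j) = (-1) ^ i * (-1) ^ j :=
  zpow_add₀ (by norm_num) i j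

theorem neg_one_zpow_mul_self (i : ℤ) : (-1 : ℝ) ^ i * (-1) ^ i = 1 := by
  rw [← neg_one_zpow_add, Even.neg_one_zpow ⟨i, rfl⟩]

variable (A) in
/-- The graded commutator `[a tⁱ, b tʲ] = (a b - (-1)^(i j) b a) tⁱ⁺ʲ` on the Laurent polynomials
`A[t, t⁻¹]`, which are encoded as finitely supported functions `ℤ →₀ A`. -/
def gradedCommutator : (ℤ →₀ A) →ₗ[ℝ] (ℤ →₀ A) →ₗ[ℝ] (ℤ →₀ A) :=
  Finsupp.lsum ℝ fun i => LinearMap.flip <| Finsupp.lsum ℝ fun j => LinearMap.flip <|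
    (LinearMap.mul ℝ A - (-1 : ℝ) ^ (i * j) • (LinearMap.mul ℝ A).flip).compr₂
      (Finsupp.lsingle (i + j))

theorem gradedCommutator_single (i j : ℤ) (a b : A) :
    gradedCommutator A (Finsupp.single i a) (Finsupp.single j b) =
      Finsupp.single (i + j) (a * b - (-1 : ℝ) ^ (i * j) • (b * a)) := by
  simp [gradedCommutator]

theorem isInternal_range_lsingle :
    DirectSum.IsInternal fun i : ℤ => LinearMap.range (Finsupp.lsingle (R := ℝ) (M := A) i) := by
  rw [DirectSum.isInternal_submodule_iff_iSupIndep_and_iSup_eq_top]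
  refine ⟨fun i => ?_, Finsupp.iSup_lsingle_range⟩
  have h := Finsupp.disjoint_lsingle_lsingle (R := ℝ) (M := A) {i} {j | j ≠ i}
    (by simp)
  simpa using h

theorem gradedCommutator_jacobi (i j : ℤ) (a b : A) (c : ℤ →₀ A) :
    gradedCommutator A (Finsupp.single i a) (gradedCommutator A (Finsupp.single j b) c) =
      gradedCommutator A (gradedCommutator A (Finsupp.single i a) (Finsupp.single j b)) c +
        (-1 : ℝ) ^ (i * j) •
          gradedCommutator A (Finsupp.single j b) (gradedCommutator A (Finsupp.single i a) c) := by
  induction c using Finsupp.induction_linear with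
  | zero => simp
  | add c c' hc hc' =>
    simp only [map_add, hc, hc', smul_add]
    abel
  | single k c =>
    simp only [gradedCommutator_single, mul_add, add_mul, neg_one_zpow_add, Finsupp.smul_single,
      add_assoc, add_left_comm j i k, ← Finsupp.single_add, mul_comm j i]
    congr 1
    have h (x : ℝ) : (-1) ^ (i * j) * ((-1) ^ (i * j) * x) = x := by
      rw [← mul_assoc, neg_one_zpow_mul_self, one_mul]
    simp only [mul_sub, sub_mul, smul_sub, mul_smul_comm, smul_mul_assoc, smul_smul, mul_assoc, h]
    module

/-- The Laurent polynomials over an associative algebra `A` form a DGLA under the graded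
commutator, with zero differential. Its homogeneous pieces are copies of `A`, so a morphism into it
is a representation in `A` that sees the grading of its source only through signs. -/
def commutatorDGLA (A : Type) [Ring A] [Algebra ℝ A] : DGLA where
  carrier := ℤ →₀ A
  grade i := LinearMap.range (Finsupp.lsingle i)
  isInternal := isInternal_range_lsingle
  bracket := gradedCommutator A
  d := 0
  bracket_grade := by
    rintro i j _ ⟨a, rfl⟩ _ ⟨b, rfl⟩
    exact ⟨_, (gradedCommutator_single i j a b).symm⟩
  d_grade _ _ _ := Submodule.zero_mem _
  d_sq _ := rfl
  antisymm := by
    rintro i j _ ⟨a, rfl⟩ _ ⟨b, rfl⟩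
    simp only [Finsupp.lsingle_apply, gradedCommutator_single, add_comm j i, mul_comm j i,
      Finsupp.smul_single, neg_smul, smul_sub, smul_smul, neg_one_zpow_mul_self, one_smul,
      ← Finsupp.single_neg, neg_sub]
  jacobi := by
    rintro i j _ ⟨a, rfl⟩ _ ⟨b, rfl⟩ c
    exact gradedCommutator_jacobi i j a b c
  leibniz _ _ _ _ := by simp

end GradedCommutator

/-! ### Filtrations -/

theorem ker_le_range_of_filtered_homotopy {K V : Type*} [Field K] [AddCommGroup V] [Module K V]
    {d h : V →ₗ[K] V} (d_sq : ∀ a, d (d a) = 0) {F : ℕ → Submodule K V} {c : ℕ → K}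
    (exhaustive : ∀ a, ∃ n, a ∈ F n) (hc : ∀ n, c n ≠ 0)
    (homotopy : ∀ n, ∀ a ∈ F (n + 1), d (h a) + h (d a) - c n • a ∈ F n)
    (base : ∀ a ∈ F 0, d a = 0 → a ∈ LinearMap.range d) : LinearMap.ker d ≤ LinearMap.range d := by
  have exact_on (n : ℕ) : ∀ a ∈ F n, d a = 0 → a ∈ LinearMap.range d := by
    induction n with
    | zero => exact base
    | succ n ih =>
      intro a ha hda
      have hmem : d (h a) - c n • a ∈ F n := by simpa [hda] using homotopy n a ha
      obtain ⟨b, hb⟩ := ih _ hmem (by simp [d_sq, hda])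
      refine ⟨(c n)⁻¹ • (h a - b), ?_⟩
      rw [map_smul, map_sub, hb, sub_sub_cancel, inv_smul_smul₀ (hc n)]
  intro a ha
  obtain ⟨n, hn⟩ := exhaustive a
  exact exact_on n a hn ha

section FilteredEndomorphisms

variable {K M : Type*} [Field K] [AddCommGroup M] [Module K M] {W : ℤ → Submodule K M}

/-- The endomorphisms of a filtered vector space that shift the filtration `W` by at most `n`. -/
def filteredEnd (W : ℤ → Submodule K M) (n : ℤ) : Submodule K (Module.End K M) :=
  ⨅ k, Submodule.compatibleMaps (W k) (W (k + n))

theorem mem_filteredEnd {n : ℤ} {f : Module.End K M} :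
    f ∈ filteredEnd W n ↔ ∀ k, ∀ m ∈ W k, f m ∈ W (k + n) :=
  Submodule.mem_iInf _

theorem filteredEnd_mono (hW : Monotone W) : Monotone (filteredEnd W) := fun _ _ hmn _ hf =>
  mem_filteredEnd.2 fun k m hm => hW (by lia) (mem_filteredEnd.1 hf k m hm)

theorem mul_mem_filteredEnd {m n r : ℤ} (hr : m + n = r) {f f' : Module.End K M}
    (hf : f ∈ filteredEnd W m) (hf' : f' ∈ filteredEnd W n) : f * f' ∈ filteredEnd W r := by
  refine mem_filteredEnd.2 fun k v hv => ?_
  rw [← hr, add_comm m, ← add_assoc]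
  exact mem_filteredEnd.1 hf _ _ (mem_filteredEnd.1 hf' _ _ hv)

end FilteredEndomorphisms

namespace DGLA

variable (D : DGLA)

/-- The decomposition of a DGLA into its homogeneous components. -/
abbrev decomposition : DirectSum.Decomposition D.grade := D.isInternal.chooseDecomposition

/-- The parity involution, acting as `(-1)^i` in degree `i`. -/
def parity : D.carrier →ₗ[ℝ] D.carrier :=
  letI := D.decomposition
  DirectSum.toModule ℝ ℤ D.carrier (fun i => (-1 : ℝ) ^ i • (D.grade i).subtype) ∘ₗ
    (DirectSum.decomposeLinearEquiv D.grade).toLinearMap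

variable {D}

theorem parity_apply {i : ℤ} {a : D.carrier} (ha : a ∈ D.grade i) :
    D.parity a = (-1 : ℝ) ^ i • a := by
  let := D.decomposition
  have h : DirectSum.decomposeLinearEquiv D.grade a =
      DirectSum.lof ℝ ℤ (fun i => D.grade i) i ⟨a, ha⟩ :=
    DirectSum.decompose_of_mem D.grade ha
  simp [parity, h]

theorem induction_homogeneous {p : D.carrier → Prop} (zero : p 0)
    (homogeneous : ∀ i, ∀ a ∈ D.grade i, p a) (add : ∀ a b, p a → p b → p (a + b))
    (a : D.carrier) : p a :=
  letI := D.decomposition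
  DirectSum.Decomposition.inductionOn D.grade zero (fun {i} a => homogeneous i a a.2) add a

theorem parity_d (a : D.carrier) : D.parity (D.d a) = -D.d (D.parity a) := by
  induction a using induction_homogeneous with
  | zero => simp
  | homogeneous i a ha =>
    simp [parity_apply ha, parity_apply (D.d_grade i a ha), neg_one_zpow_add]
  | add a b ha hb => simp only [map_add, ha, hb, neg_add]

theorem parity_parity (a : D.carrier) : D.parity (D.parity a) = a := by
  induction a using induction_homogeneous with
  | zero => simp
  | homogeneous i a ha =>
    rw [parity_apply ha, map_smul, parity_apply ha, smul_smul, neg_one_zpow_mul_self, one_smul]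
  | add a b ha hb => simp only [map_add, ha, hb]

theorem exists_mem_grade_of_d_mem {n : ℤ} {b : D.carrier} (hb : D.d b ∈ D.grade n) :
    ∃ c ∈ D.grade (n - 1), D.d c = D.d b := by
  let := D.decomposition
  have h (b : D.carrier) : (DirectSum.decompose D.grade (D.d b) n : D.carrier) =
      D.d (DirectSum.decompose D.grade b (n - 1)) := by
    induction b using induction_homogeneous with
    | zero => simp
    | homogeneous i b hb =>
      have hdb := D.d_grade i b hb
      rcases eq_or_ne i (n - 1) with rfl | hi
      · rw [sub_add_cancel] at hdb
        rw [DirectSum.decompose_of_mem_same _ hdb, DirectSum.decompose_of_mem_same _ hb]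
      · rw [DirectSum.decompose_of_mem_ne _ hdb (by lia), DirectSum.decompose_of_mem_ne _ hb hi,
          map_zero]
    | add b c hb hc => simp [DirectSum.decompose_add, hb, hc]
  exact ⟨_, (DirectSum.decompose D.grade b (n - 1)).2,
    (h b).symm.trans (DirectSum.decompose_of_mem_same _ hb)⟩

theorem isAcyclic_of_ker_le_range (h : LinearMap.ker D.d ≤ LinearMap.range D.d) :
    D.IsAcyclic := by
  rintro n _ ⟨ha, hda⟩
  obtain ⟨b, rfl⟩ := h hda
  exact ⟨ha, exists_mem_grade_of_d_mem ha⟩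

/-- Right-normed iterated brackets of generators, where `S n i` is the set of generators
of weight `n` and degree `i`; weights and degrees are additive. -/
inductive Monomial (S : ℤ → ℤ → D.carrier → Prop) : ℤ → ℤ → D.carrier → Prop
  | of {n i : ℤ} {a : D.carrier} (ha : S n i a) : Monomial S n i a
  | bracket {m n i j : ℤ} {a b : D.carrier} (ha : S m i a) (hb : Monomial S n j b) :
      Monomial S (m + n) (i + j) (D.bracket a b)

/-- The filtration by weight, spanned in step `n` by the monomials of weight at most `n`. -/
def weightFiltration (S : ℤ → ℤ → D.carrier → Prop) (n : ℤ) : Submodule ℝ D.carrier :=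
  Submodule.span ℝ {b | ∃ m ≤ n, ∃ j, Monomial S m j b}

variable {S : ℤ → ℤ → D.carrier → Prop}

theorem weightFiltration_mono : Monotone (weightFiltration S) := fun _ _ hmn =>
  Submodule.span_mono fun _ ⟨k, hk, h⟩ => ⟨k, hk.trans hmn, h⟩

theorem Monomial.mem_weightFiltration {n j : ℤ} {b : D.carrier} (hb : Monomial S n j b) :
    b ∈ weightFiltration S n :=
  Submodule.subset_span ⟨n, le_rfl, j, hb⟩

theorem weightFiltration_le {n : ℤ} {Q : Submodule ℝ D.carrier}
    (hQ : ∀ m ≤ n, ∀ j b, Monomial S m j b → b ∈ Q) : weightFiltration S n ≤ Q :=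
  Submodule.span_le.2 fun b ⟨m, hm, j, hb⟩ => hQ m hm j b hb

theorem bracket_generator_mem {m n i : ℤ} {a b : D.carrier} (ha : S m i a)
    (hb : b ∈ weightFiltration S n) : D.bracket a b ∈ weightFiltration S (m + n) :=
  weightFiltration_le (Q := (weightFiltration S (m + n)).comap (D.bracket a))
    (fun _ hk _ _ hc => weightFiltration_mono (by lia)
      (Monomial.bracket ha hc).mem_weightFiltration) hb

section Homogeneous

variable (hS : ∀ n i a, S n i a → a ∈ D.grade i)
include hS

theorem Monomial.mem_grade {n j : ℤ} {b : D.carrier} (hb : Monomial S n j b) :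
    b ∈ D.grade j := by
  induction hb with
  | of ha => exact hS _ _ _ ha
  | bracket ha _ ih => exact D.bracket_grade _ _ _ (hS _ _ _ ha) _ ih

theorem Monomial.bracket_mem {m n i : ℤ} {a b : D.carrier} (ha : Monomial S m i a)
    (hb : b ∈ weightFiltration S n) : D.bracket a b ∈ weightFiltration S (m + n) := by
  induction ha generalizing n b with
  | of ha => exact bracket_generator_mem ha hb
  | @bracket m m' i i' a a' ha ha' ih =>
    have jacobi := D.jacobi i i' a (hS _ _ _ ha) a' (ha'.mem_grade hS) b
    rw [← sub_eq_iff_eq_add] at jacobi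
    rw [← jacobi]
    refine sub_mem ?_ (Submodule.smul_mem _ _ ?_)
    · simpa only [add_assoc] using bracket_generator_mem ha (ih hb)
    · simpa only [add_left_comm, add_assoc] using ih (bracket_generator_mem ha hb)

theorem bracket_mem_weightFiltration {m n : ℤ} {a b : D.carrier}
    (ha : a ∈ weightFiltration S m) (hb : b ∈ weightFiltration S n) :
    D.bracket a b ∈ weightFiltration S (m + n) :=
  weightFiltration_le (Q := (weightFiltration S (m + n)).comap (D.bracket.flip b))
    (fun _ hk _ _ hc => weightFiltration_mono (by lia) (hc.bracket_mem hS hb)) ha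

theorem parity_mem_weightFiltration {n : ℤ} {a : D.carrier} (ha : a ∈ weightFiltration S n) :
    D.parity a ∈ weightFiltration S n := by
  refine weightFiltration_le (Q := (weightFiltration S n).comap D.parity)
    (fun m hm j b hb => ?_) ha
  rw [Submodule.mem_comap, parity_apply (hb.mem_grade hS)]
  exact Submodule.smul_mem _ _ (weightFiltration_mono hm hb.mem_weightFiltration)

theorem exists_mem_weightFiltration (generates : D.lieSpan {a | ∃ n i, S n i a} = ⊤)
    (a : D.carrier) : ∃ n, a ∈ weightFiltration S n := by
  have mem_iSup {b : D.carrier} :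
      b ∈ ⨆ n, weightFiltration S n ↔ ∃ n, b ∈ weightFiltration S n :=
    Submodule.mem_iSup_of_directed _ weightFiltration_mono.directed_le
  rw [← mem_iSup]
  refine (sInf_le ⟨?_, fun b hb c hc => ?_⟩ : D.lieSpan _ ≤ _) (generates ▸ Submodule.mem_top)
  · rintro b ⟨n, i, hb⟩
    exact mem_iSup.2 ⟨n, (Monomial.of hb).mem_weightFiltration⟩
  · obtain ⟨m, hm⟩ := mem_iSup.1 hb
    obtain ⟨n, hn⟩ := mem_iSup.1 hc
    exact mem_iSup.2 ⟨m + n, bracket_mem_weightFiltration hS hm hn⟩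

theorem generator_induction (generates : D.lieSpan {a | ∃ n i, S n i a} = ⊤)
    {p : D.carrier → Prop} (zero : p 0) (add : ∀ a b, p a → p b → p (a + b))
    (smul : ∀ (r : ℝ) a, p a → p (r • a)) (of : ∀ n i a, S n i a → p a)
    (bracket : ∀ i, ∀ a ∈ D.grade i, ∀ j, ∀ b ∈ D.grade j, p a → p b → p (D.bracket a b))
    (a : D.carrier) : p a := by
  have monomial {n j b} (hb : Monomial S n j b) : p b := by
    induction hb with
    | of ha => exact of _ _ _ ha
    | bracket ha hb ih =>
      exact bracket _ _ (hS _ _ _ ha) _ _ (hb.mem_grade hS) (of _ _ _ ha) ih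
  obtain ⟨n, ha⟩ := exists_mem_weightFiltration hS generates a
  exact Submodule.span_induction (fun b ⟨_, _, _, hb⟩ => monomial hb) zero
    (fun b c _ _ => add b c) (fun r b _ => smul r b) ha

end Homogeneous

end DGLA

/-! ### Universal properties of `Dg` -/

/-- A Lie algebra, regarded as a DGLA concentrated in degree zero. -/
def lieDGLA (g : Type) [LieRing g] [LieAlgebra ℝ g] : DGLA where
  carrier := g
  grade i := if i = 0 then ⊤ else ⊥
  isInternal := by
    rw [DirectSum.isInternal_submodule_iff_iSupIndep_and_iSup_eq_top]
    refine ⟨fun i => ?_, top_le_iff.1 (le_iSup_of_le 0 (by simp))⟩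
    rcases eq_or_ne i 0 with rfl | hi
    · simp +contextual
    · simp [hi]
  bracket := (LieModule.toEnd ℝ g g : g →ₗ[ℝ] g →ₗ[ℝ] g)
  d := 0
  bracket_grade i j a ha b hb := by
    rcases eq_or_ne i 0 with rfl | hi
    · rcases eq_or_ne j 0 with rfl | hj <;> simp_all
    · simp_all
  d_grade _ _ _ := Submodule.zero_mem _
  d_sq _ := rfl
  antisymm i j a ha b _ := by
    rcases eq_or_ne i 0 with rfl | hi
    · simp
    · simp_all
  jacobi i j a ha b _ c := by
    rcases eq_or_ne i 0 with rfl | hi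
    · simp
    · simp_all
  leibniz _ _ _ _ := by simp

/-- The space `D ⊕ g ⊕ ℝ` underlying the representation of `Dg` from which the contracting
homotopy is built. -/
abbrev RepSpace (g : Type) (D : DGLA) : Type := D.carrier × g × ℝ

namespace DgPresentation

variable {g : Type} [LieRing g] [LieAlgebra ℝ g] {D : DGLA} (P : DgPresentation g D)

theorem l_injective : Function.Injective P.l := by
  obtain ⟨φ, ⟨-, -, hφ, -⟩, -⟩ := P.free (lieDGLA g) (LinearMap.id : g →ₗ[ℝ] g) (fun _ => 0)
    (fun _ _ _ => rfl) (fun _ => (Submodule.mem_top : _ ∈ (⊤ : Submodule ℝ g)))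
    (fun _ _ => Submodule.zero_mem _) (fun _ _ => rfl)
    (fun _ _ _ => (map_zero _).trans Finset.sum_const_zero.symm)
  exact Function.LeftInverse.injective hφ

theorem exists_representation {A : Type} [Ring A] [Algebra ℝ A] (l' : g →ₗ[ℝ] A)
    (J' : (k : ℕ) → MultilinearMap ℝ (fun _ : Fin (k + 1) => g) A)
    (J'_symm : ∀ k, IsSymmetricMultilinear (J' k))
    (comm_l_l : ∀ x y, l' x * l' y - l' y * l' x = l' ⁅x, y⁆)
    (comm_l_J : ∀ k x v, l' x * J' k v - J' k v * l' x =
      ∑ j, J' k (Function.update v j ⁅x, v j⁆)) :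
    ∃ R : D.carrier →ₗ[ℝ] A,
      (∀ i j, ∀ a ∈ D.grade i, ∀ b ∈ D.grade j,
        R (D.bracket a b) = R a * R b - (-1 : ℝ) ^ (i * j) • (R b * R a)) ∧
      (∀ x, R (P.l x) = l' x) ∧ ∀ k v, R (P.J k v) = J' k v := by
  let l'' : g →ₗ[ℝ] ℤ →₀ A := Finsupp.lsingle 0 ∘ₗ l'
  let deg (k : ℕ) : ℤ := 1 - 2 * ((k : ℤ) + 1)
  let J'' (k : ℕ) : MultilinearMap ℝ (fun _ : Fin (k + 1) => g) (ℤ →₀ A) :=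
    (Finsupp.lsingle (R := ℝ) (deg k)).compMultilinearMap (J' k)
  have J''_symm (k v) (σ : Equiv.Perm (Fin (k + 1))) : J'' k (v ∘ σ) = J'' k v := by
    simp [J'', J'_symm k v σ]
  have bracket_l_l (x y) : gradedCommutator A (l'' x) (l'' y) = l'' ⁅x, y⁆ := by
    simp [l'', gradedCommutator_single, comm_l_l]
  have bracket_l_J (k x v) :
      gradedCommutator A (l'' x) (J'' k v) = ∑ j, J'' k (Function.update v j ⁅x, v j⁆) := by
    simp [l'', J'', gradedCommutator_single, comm_l_J, Finsupp.single_finsetSum]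
  obtain ⟨φ, map_bracket, map_grade, map_l, map_J⟩ : ∃ φ : D.carrier →ₗ[ℝ] ℤ →₀ A,
      (∀ a b, φ (D.bracket a b) = gradedCommutator A (φ a) (φ b)) ∧
      (∀ i, ∀ a ∈ D.grade i, ∃ a', Finsupp.single i a' = φ a) ∧
      (∀ x, φ (P.l x) = l'' x) ∧ ∀ k v, φ (P.J k v) = J'' k v :=
    (P.free (commutatorDGLA A) l'' J'' J''_symm (fun x => ⟨l' x, rfl⟩)
      (fun k v => ⟨J' k v, rfl⟩) bracket_l_l bracket_l_J).exists
  let coeffSum : (ℤ →₀ A) →ₗ[ℝ] A := Finsupp.lsum ℝ fun _ => LinearMap.id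
  have coeffSum_single (i a) : coeffSum (Finsupp.single i a) = a := by simp [coeffSum]
  refine ⟨coeffSum ∘ₗ φ, fun i j a ha b hb => ?_,
    fun x => (congrArg coeffSum (map_l x)).trans (coeffSum_single _ _),
    fun k v => (congrArg coeffSum (map_J k v)).trans (coeffSum_single _ _)⟩
  obtain ⟨a', ha'⟩ := map_grade i a ha
  obtain ⟨b', hb'⟩ := map_grade j b hb
  simp only [LinearMap.comp_apply, map_bracket, ← ha', ← hb', gradedCommutator_single,
    coeffSum_single]

/-! ### Derivatives of the generators -/

theorem isSymmetricMultilinear_J (k : ℕ) : IsSymmetricMultilinear (P.J k) := P.J_symm k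

/-- The generators `𝓘(x)` with `x ∈ g`, as a linear map. -/
def J₀ : g →ₗ[ℝ] D.carrier :=
  (MultilinearMap.ofSubsingleton ℝ g D.carrier (0 : Fin 1)).symm (P.J 0)

theorem J_zero (v : Fin 1 → g) : P.J 0 v = P.J₀ (v 0) :=
  congrArg (P.J 0) (funext fun i => by rw [Fin.fin_one_eq_zero i])

theorem J₀_mem_grade (y : g) : P.J₀ y ∈ D.grade (-1) := by
  simpa [J_zero] using P.J_grade 0 fun _ => y

theorem d_J₀ (y : g) : D.d (P.J₀ y) = P.l y := by
  simpa only [J_zero] using P.d_J_one y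

/-- The derivative at `y`, in the direction `x`, of the generator `y ↦ 𝓘(y^(k+1))`. -/
def JDeriv (k : ℕ) (y : g) : g →ₗ[ℝ] D.carrier := ((k : ℝ) + 1) • (P.J k).curryRight fun _ => y

theorem JDeriv_apply (k : ℕ) (y x : g) :
    P.JDeriv k y x = ((k : ℝ) + 1) • P.J k (Fin.snoc (fun _ => y) x) := rfl

theorem linearDeriv_J (k : ℕ) (y x : g) :
    (P.J k).linearDeriv (fun _ => y) (fun _ => x) = P.JDeriv k y x :=
  (P.isSymmetricMultilinear_J k).linearDeriv_diag y x

theorem JDeriv_zero (y x : g) : P.JDeriv 0 y x = P.J₀ x := by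
  simp [JDeriv_apply, J_zero, Fin.snoc]

theorem JDeriv_self (k : ℕ) (y : g) : P.JDeriv k y y = ((k : ℝ) + 1) • P.J k fun _ => y := by
  simp [← linearDeriv_J, MultilinearMap.linearDeriv_apply, ← Nat.cast_smul_eq_nsmul ℝ]

theorem JDeriv_mem_grade (k : ℕ) (y x : g) :
    P.JDeriv k y x ∈ D.grade (1 - 2 * ((k : ℤ) + 1)) :=
  Submodule.smul_mem _ _ (P.J_grade k _)

theorem neg_one_zpow_degree_J (k : ℕ) : (-1 : ℝ) ^ (1 - 2 * ((k : ℤ) + 1)) = -1 :=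
  Odd.neg_one_zpow ⟨-(k + 1 : ℤ), by ring⟩

theorem neg_one_zpow_degree_J_mul (k : ℕ) (j : ℤ) :
    (-1 : ℝ) ^ ((1 - 2 * ((k : ℤ) + 1)) * j) = (-1) ^ j := by
  rw [zpow_mul, neg_one_zpow_degree_J]

theorem bracket_comm_of_degree_J {k m : ℕ} {a b : D.carrier}
    (ha : a ∈ D.grade (1 - 2 * ((k : ℤ) + 1))) (hb : b ∈ D.grade (1 - 2 * ((m : ℤ) + 1))) :
    D.bracket a b = D.bracket b a := by
  simpa [neg_one_zpow_degree_J_mul, neg_one_zpow_degree_J] using D.antisymm _ _ a ha b hb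

theorem d_JDeriv (k : ℕ) (y x : g) :
    D.d (P.JDeriv (k + 1) y x) =
      ∑ s ∈ Finset.range (k + 1), D.bracket (P.J s fun _ => y) (P.JDeriv (k - s) y x) := by
  have symm : ∑ s ∈ Finset.range (k + 1), D.bracket (P.JDeriv s y x) (P.J (k - s) fun _ => y) =
      ∑ s ∈ Finset.range (k + 1), D.bracket (P.J s fun _ => y) (P.JDeriv (k - s) y x) := by
    rw [← sum_range_sub_swap fun s r => D.bracket (P.J s fun _ => y) (P.JDeriv r y x)]
    exact Finset.sum_congr rfl fun s _ =>
      bracket_comm_of_degree_J (P.JDeriv_mem_grade s y x) (P.J_grade (k - s) _)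
  rw [← sub_eq_zero, ← Module.forall_dual_apply_eq_zero_iff ℝ]
  intro φ
  have lhs := hasDerivAt_dual_comp_diag (φ ∘ₗ D.d) (P.J (k + 1)) y x
  simp only [LinearMap.comp_apply, P.d_J, map_smul, map_sum] at lhs
  have rhs := (HasDerivAt.fun_sum fun s (_ : s ∈ Finset.range (k + 1)) =>
    hasDerivAt_dual_bilinear_diag D.bracket (P.J s) (P.J (k - s)) φ y x).const_smul (1 / 2 : ℝ)
  have h := lhs.unique rhs
  simp only [linearDeriv_J, ← map_sum, ← map_smul, Finset.sum_add_distrib, symm] at h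
  rw [map_sub, h, ← two_smul ℝ, smul_smul]
  norm_num

/-- The generators of `Dg`: `l x` in weight `0`, and `𝓘(u)` in weight `n` for `u ∈ Sⁿ g`. -/
inductive Generator : ℤ → ℤ → D.carrier → Prop
  | l (x : g) : Generator 0 0 (P.l x)
  | J (k : ℕ) (v : Fin (k + 1) → g) : Generator (k + 1) (1 - 2 * ((k : ℤ) + 1)) (P.J k v)

theorem lieSpan_generator : D.lieSpan {a | ∃ n i, P.Generator n i a} = ⊤ := by
  rw [← P.generates]
  congr 1
  ext a
  constructor
  · rintro ⟨_, _, x | ⟨k, v⟩⟩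
    exacts [.inl ⟨x, rfl⟩, .inr ⟨k, v, rfl⟩]
  · rintro (⟨x, rfl⟩ | ⟨k, v, rfl⟩)
    exacts [⟨_, _, .l x⟩, ⟨_, _, .J k v⟩]

variable {P} in
theorem Generator.mem_grade (n i : ℤ) (a : D.carrier) : P.Generator n i a → a ∈ D.grade i := by
  rintro (x | ⟨k, v⟩)
  exacts [P.l_grade x, P.J_grade k v]

theorem bracket_l_J₀ (x y : g) : D.bracket (P.l x) (P.J₀ y) = P.J₀ ⁅x, y⁆ := by
  have h := P.bracket_lJ 0 x fun _ => y
  simpa [J_zero] using h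

theorem bracket_J₀_l (y x : g) : D.bracket (P.J₀ y) (P.l x) = P.J₀ ⁅y, x⁆ := by
  have h := D.antisymm _ 0 _ (P.J_grade 0 fun _ => y) _ (P.l_grade x)
  simpa [J_zero, bracket_l_J₀, ← map_neg] using h

theorem monomial_weight_cases {n j : ℤ} {b : D.carrier} (hb : D.Monomial P.Generator n j b) :
    (n = 0 ∧ ∃ x, b = P.l x) ∨ (n = 1 ∧ ∃ y, b = P.J₀ y) ∨ 2 ≤ n := by
  have generator {n i a} (ha : P.Generator n i a) :
      (n = 0 ∧ ∃ x, a = P.l x) ∨ (n = 1 ∧ ∃ y, a = P.J₀ y) ∨ 2 ≤ n := by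
    rcases ha with x | ⟨_ | k, v⟩
    · exact .inl ⟨rfl, x, rfl⟩
    · exact .inr (.inl ⟨rfl, v 0, P.J_zero v⟩)
    · exact .inr (.inr (by push_cast; lia))
  induction hb with
  | of ha => exact generator ha
  | bracket ha _ ih =>
    rcases generator ha with ⟨rfl, x, rfl⟩ | ⟨rfl, y, rfl⟩ | hm <;>
      rcases ih with ⟨rfl, x', rfl⟩ | ⟨rfl, y', rfl⟩ | hn
    · exact .inl ⟨rfl, _, P.bracket_ll x x'⟩
    · exact .inr (.inl ⟨rfl, _, P.bracket_l_J₀ x y'⟩)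
    · exact .inr (.inr (by lia))
    · exact .inr (.inl ⟨rfl, _, P.bracket_J₀_l y x'⟩)
    all_goals exact .inr (.inr (by lia))

/-! ### The representation on `D ⊕ g ⊕ ℝ` -/

/-- The action of the generators `l x` on `D ⊕ g ⊕ ℝ`. -/
def actL : g →ₗ[ℝ] Module.End ℝ (RepSpace g D) where
  toFun x := (D.bracket (P.l x)).prodMap ((LieAlgebra.ad ℝ g x).prodMap 0)
  map_add' x y := by ext <;> simp
  map_smul' r x := by ext <;> simp

theorem actL_apply (x : g) (m : RepSpace g D) :
    P.actL x m = (D.bracket (P.l x) m.1, ⁅x, m.2.1⁆, 0) := rfl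

/-- The summand of the action of the generators `J k v` that maps `ℝ` to `g`. -/
def actJScalar : (k : ℕ) → MultilinearMap ℝ (fun _ : Fin (k + 1) => g) (ℝ →ₗ[ℝ] g)
  | 0 => MultilinearMap.ofSubsingleton ℝ g _ (0 : Fin 1) (LinearMap.lsmul ℝ g).flip
  | _ + 1 => 0

theorem actJScalar_apply (k : ℕ) (v : Fin (k + 1) → g) (t : ℝ) :
    actJScalar k v t = if k = 0 then t • v 0 else 0 := by
  cases k <;> rfl

/-- The action of the generators `J k v` on `D ⊕ g ⊕ ℝ`: adjoint on `D`, and extended by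
`𝓘(u) • x = (k + 2) 𝓘(u x)` for `u ∈ S^(k+1) g` and `x ∈ g = S¹ g`, and by `𝓘(y) • 1 = y ∈ g`. -/
def actJ (k : ℕ) : MultilinearMap ℝ (fun _ : Fin (k + 1) => g) (Module.End ℝ (RepSpace g D)) :=
  (LinearMap.compRight ℝ (LinearMap.inl ℝ _ _) ∘ₗ LinearMap.lcomp ℝ _ (LinearMap.fst ℝ _ _) ∘ₗ
    D.bracket).compMultilinearMap (P.J k) +
  ((k : ℝ) + 2) • (LinearMap.compRight ℝ (LinearMap.inl ℝ _ _) ∘ₗ LinearMap.lcomp ℝ _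
    (LinearMap.fst ℝ _ _ ∘ₗ LinearMap.snd ℝ _ _)).compMultilinearMap (P.J (k + 1)).curryRight +
  (LinearMap.compRight ℝ (LinearMap.inr ℝ _ _ ∘ₗ LinearMap.inl ℝ _ _) ∘ₗ LinearMap.lcomp ℝ _
    (LinearMap.snd ℝ _ _ ∘ₗ LinearMap.snd ℝ _ _)).compMultilinearMap (actJScalar k)

theorem actJ_apply (k : ℕ) (v : Fin (k + 1) → g) (m : RepSpace g D) :
    P.actJ k v m = (D.bracket (P.J k v) m.1 + ((k : ℝ) + 2) • P.J (k + 1) (Fin.snoc v m.2.1),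
      if k = 0 then m.2.2 • v 0 else 0, 0) := by
  simp [actJ, actJScalar_apply]

theorem isSymmetricMultilinear_actJ (k : ℕ) : IsSymmetricMultilinear (P.actJ k) := by
  intro v σ
  refine LinearMap.ext fun m => ?_
  have scalar : (if k = 0 then m.2.2 • (v ∘ σ) 0 else 0) = if k = 0 then m.2.2 • v 0 else 0 := by
    split_ifs with hk
    · subst hk
      rw [Function.comp_apply, Fin.fin_one_eq_zero (σ 0)]
    · rfl
  rw [actJ_apply, actJ_apply, scalar, P.isSymmetricMultilinear_J k v σ,
    (P.isSymmetricMultilinear_J (k + 1)).apply_snoc_comp]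

theorem actL_comm_actL (x y : g) :
    P.actL x * P.actL y - P.actL y * P.actL x = P.actL ⁅x, y⁆ := by
  refine LinearMap.ext fun m => ?_
  have jacobi := D.jacobi 0 0 _ (P.l_grade x) _ (P.l_grade y) m.1
  simp [actL_apply, jacobi, P.bracket_ll]

theorem bracket_l_J_snoc (k : ℕ) (x : g) (v : Fin (k + 1) → g) (y : g) :
    D.bracket (P.l x) (P.J (k + 1) (Fin.snoc v y)) =
      ∑ j, P.J (k + 1) (Fin.snoc (Function.update v j ⁅x, v j⁆) y) +
        P.J (k + 1) (Fin.snoc v ⁅x, y⁆) := by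
  simp [P.bracket_lJ, Fin.sum_univ_castSucc (n := k + 1), Fin.snoc_update, Fin.update_snoc_last]

theorem actL_comm_actJ (k : ℕ) (x : g) (v : Fin (k + 1) → g) :
    P.actL x * P.actJ k v - P.actJ k v * P.actL x =
      ∑ j, P.actJ k (Function.update v j ⁅x, v j⁆) := by
  refine LinearMap.ext fun m => Prod.ext ?_ (Prod.ext ?_ ?_)
  · have jacobi := D.jacobi 0 _ _ (P.l_grade x) _ (P.J_grade k v) m.1
    simp only [zero_mul, zpow_zero, one_smul] at jacobi
    simp only [LinearMap.sub_apply, Module.End.mul_apply, actL_apply, actJ_apply,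
      LinearMap.sum_apply, Prod.fst_sub, Prod.fst_sum, Finset.sum_add_distrib, map_add, map_smul,
      bracket_l_J_snoc, jacobi, P.bracket_lJ k, map_sum, ← Finset.smul_sum, smul_add]
    abel
  · rcases k with _ | k <;> simp [actL_apply, actJ_apply, Prod.snd_sum]
  · simp [actL_apply, actJ_apply, Prod.snd_sum]

/-- The representation of the graded Lie algebra `Dg` on `D ⊕ g ⊕ ℝ` given on generators by
`actL` and `actJ`. -/
def rep : D.carrier →ₗ[ℝ] Module.End ℝ (RepSpace g D) :=
  (P.exists_representation P.actL P.actJ P.isSymmetricMultilinear_actJ P.actL_comm_actL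
    P.actL_comm_actJ).choose

theorem rep_bracket {i j : ℤ} {a b : D.carrier} (ha : a ∈ D.grade i) (hb : b ∈ D.grade j) :
    P.rep (D.bracket a b) = P.rep a * P.rep b - (-1 : ℝ) ^ (i * j) • (P.rep b * P.rep a) :=
  (P.exists_representation P.actL P.actJ P.isSymmetricMultilinear_actJ P.actL_comm_actL
    P.actL_comm_actJ).choose_spec.1 i j a ha b hb

theorem rep_l (x : g) : P.rep (P.l x) = P.actL x :=
  (P.exists_representation P.actL P.actJ P.isSymmetricMultilinear_actJ P.actL_comm_actL
    P.actL_comm_actJ).choose_spec.2.1 x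

theorem rep_J (k : ℕ) (v : Fin (k + 1) → g) : P.rep (P.J k v) = P.actJ k v :=
  (P.exists_representation P.actL P.actJ P.isSymmetricMultilinear_actJ P.actL_comm_actL
    P.actL_comm_actJ).choose_spec.2.2 k v

variable {P} in
theorem generator_induction {p : D.carrier → Prop} (zero : p 0)
    (add : ∀ a b, p a → p b → p (a + b)) (smul : ∀ (r : ℝ) a, p a → p (r • a))
    (l : ∀ x, p (P.l x)) (J : ∀ k v, p (P.J k v))
    (bracket : ∀ i, ∀ a ∈ D.grade i, ∀ j, ∀ b ∈ D.grade j, p a → p b → p (D.bracket a b))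
    (a : D.carrier) : p a := by
  refine DGLA.generator_induction Generator.mem_grade P.lieSpan_generator zero add smul ?_ bracket a
  rintro _ _ _ (x | ⟨k, v⟩)
  exacts [l x, J k v]

theorem rep_apply_inl (a c : D.carrier) : P.rep a (c, 0, 0) = (D.bracket a c, 0, 0) := by
  induction a using P.generator_induction generalizing c with
  | zero => simp [Prod.ext_iff]
  | add a b ha hb => simp [ha, hb]
  | smul r a ha => simp [ha]
  | l x => simp [rep_l, actL_apply]
  | J k v => simp [rep_J, actJ_apply, (P.J (k + 1)).map_coord_zero (Fin.last _)]
  | bracket i a hi j b hj ha hb =>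
    simp [P.rep_bracket hi hj, ha, hb, D.jacobi i j a hi b hj c, Prod.ext_iff]

theorem rep_apply_snd_snd (a : D.carrier) (m : RepSpace g D) : (P.rep a m).2.2 = 0 := by
  induction a using P.generator_induction generalizing m with
  | zero => simp
  | add a b ha hb => simp [ha, hb]
  | smul r a ha => simp [ha]
  | l x => simp [rep_l, actL_apply]
  | J k v => simp [rep_J, actJ_apply]
  | bracket i a hi j b hj ha hb => simp [P.rep_bracket hi hj, ha, hb]

/-- The endomorphism `∂ (c + x + t) = d c - 𝓘(x)` of `D ⊕ g ⊕ ℝ`. -/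
def repDiff : Module.End ℝ (RepSpace g D) :=
  LinearMap.inl ℝ _ _ ∘ₗ
    (D.d ∘ₗ LinearMap.fst ℝ _ _ - P.J₀ ∘ₗ LinearMap.fst ℝ _ _ ∘ₗ LinearMap.snd ℝ _ _)

theorem repDiff_apply (m : RepSpace g D) : P.repDiff m = (D.d m.1 - P.J₀ m.2.1, 0, 0) := rfl

/-- The map `D ⊕ g ⊕ ℝ → D` sending `1` to `b`, as an endomorphism of `D ⊕ g ⊕ ℝ`. -/
def scalarMap : D.carrier →ₗ[ℝ] Module.End ℝ (RepSpace g D) :=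
  LinearMap.compRight ℝ (LinearMap.inl ℝ _ _) ∘ₗ
    LinearMap.lcomp ℝ _ (LinearMap.snd ℝ _ _ ∘ₗ LinearMap.snd ℝ _ _) ∘ₗ
    (LinearMap.lsmul ℝ D.carrier).flip

theorem scalarMap_apply (b : D.carrier) (m : RepSpace g D) :
    scalarMap b m = (m.2.2 • b, 0, 0) := rfl

theorem scalarMap_mul_rep (a b : D.carrier) :
    (scalarMap a : Module.End ℝ (RepSpace g D)) * P.rep b = 0 :=
  LinearMap.ext fun m => by simp [scalarMap_apply, rep_apply_snd_snd]

theorem rep_mul_scalarMap (a b : D.carrier) :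
    P.rep a * scalarMap b = scalarMap (D.bracket a b) :=
  LinearMap.ext fun m => by simp [scalarMap_apply, rep_apply_inl]

/-- The failure `∂ b - (-1)^j b ∂ - d b` of the action of `b ∈ Dg`, of degree `j`, on `D ⊕ g ⊕ ℝ`
to be compatible with `∂` and the differential of `Dg`. -/
def defect : D.carrier →ₗ[ℝ] Module.End ℝ (RepSpace g D) :=
  LinearMap.mulLeft ℝ P.repDiff ∘ₗ P.rep -
    LinearMap.mulRight ℝ P.repDiff ∘ₗ P.rep ∘ₗ D.parity - P.rep ∘ₗ D.d

theorem defect_apply (b : D.carrier) :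
    P.defect b = P.repDiff * P.rep b - P.rep (D.parity b) * P.repDiff - P.rep (D.d b) := rfl

theorem defect_bracket {i j : ℤ} {a b : D.carrier} (ha : a ∈ D.grade i) (hb : b ∈ D.grade j) :
    P.defect (D.bracket a b) = P.defect a * P.rep b + (-1 : ℝ) ^ i • (P.rep a * P.defect b) -
      (-1 : ℝ) ^ (i * j) •
        (P.defect b * P.rep a + (-1 : ℝ) ^ j • (P.rep b * P.defect a)) := by
  have hi := neg_one_zpow_mul_self i
  simp only [defect_apply, DGLA.parity_apply ha, DGLA.parity_apply hb,
    DGLA.parity_apply (D.bracket_grade i j a ha b hb), D.leibniz i a ha, map_add, map_smul,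
    P.rep_bracket ha hb, P.rep_bracket (D.d_grade i a ha) hb, P.rep_bracket ha (D.d_grade j b hb),
    neg_one_zpow_add, mul_add, add_mul, one_mul, mul_one]
  simp only [mul_sub, sub_mul, smul_sub, smul_add, mul_smul_comm, smul_mul_assoc, smul_smul,
    mul_assoc]
  match_scalars <;> grind

/-! ### The defect -/

theorem rep_J_diag_apply (k : ℕ) (y : g) (m : RepSpace g D) :
    P.rep (P.J k fun _ => y) m = (D.bracket (P.J k fun _ => y) m.1 + P.JDeriv (k + 1) y m.2.1,
      if k = 0 then m.2.2 • y else 0, 0) := by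
  simp [rep_J, actJ_apply, JDeriv_apply, add_assoc, one_add_one_eq_two]

theorem rep_J₀_apply (y : g) (m : RepSpace g D) :
    P.rep (P.J₀ y) m = (D.bracket (P.J₀ y) m.1 + P.JDeriv 1 y m.2.1, m.2.2 • y, 0) := by
  simpa only [J_zero, if_true] using P.rep_J_diag_apply 0 y m

theorem rep_d_J (k : ℕ) (y : g) :
    P.rep (D.d (P.J (k + 1) fun _ => y)) =
      ∑ s ∈ Finset.range (k + 1), P.rep (P.J s fun _ => y) * P.rep (P.J (k - s) fun _ => y) := by
  have anticommutator (s : ℕ) :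
      P.rep (D.bracket (P.J s fun _ => y) (P.J (k - s) fun _ => y)) =
        P.rep (P.J s fun _ => y) * P.rep (P.J (k - s) fun _ => y) +
          P.rep (P.J (k - s) fun _ => y) * P.rep (P.J s fun _ => y) := by
    rw [P.rep_bracket (P.J_grade _ _) (P.J_grade _ _), neg_one_zpow_degree_J_mul,
      neg_one_zpow_degree_J]
    module
  have swap := sum_range_sub_swap
    (fun s r => P.rep (P.J s fun _ => y) * P.rep (P.J r fun _ => y)) k
  simp only [P.d_J, map_smul, map_sum, anticommutator, Finset.sum_add_distrib, swap]
  module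

theorem rep_d_J_apply (k : ℕ) (y x : g) (t : ℝ) :
    P.rep (D.d (P.J (k + 1) fun _ => y)) (0, x, t) =
      (∑ s ∈ Finset.range (k + 1), D.bracket (P.J s fun _ => y) (P.JDeriv (k - s + 1) y x) +
        (t * (k + 2)) • P.J (k + 1) fun _ => y, 0, 0) := by
  have last_summand : ∑ s ∈ Finset.range (k + 1), P.JDeriv (s + 1) y
      (if k - s = 0 then t • y else 0) = (t * (k + 2)) • P.J (k + 1) fun _ => y := by
    rw [Finset.sum_range_succ, Finset.sum_eq_zero fun s hs => ?_, zero_add]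
    · simp only [tsub_self, if_true, map_smul, JDeriv_self, smul_smul, Nat.cast_add, Nat.cast_one,
        add_assoc, one_add_one_eq_two]
    · rw [if_neg (by grind), map_zero]
  simp [rep_d_J, rep_J_diag_apply, Prod.ext_iff, Prod.fst_sum, Prod.snd_sum,
    Finset.sum_add_distrib, last_summand]

variable {P} in
theorem defect_apply_inl {j : ℤ} {b : D.carrier} (hb : b ∈ D.grade j) (c : D.carrier) :
    P.defect b (c, 0, 0) = 0 := by
  simp [defect_apply, DGLA.parity_apply hb, repDiff_apply, rep_apply_inl, D.leibniz j b hb]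

variable {P} in
theorem defect_apply_eq {j : ℤ} {b : D.carrier} (hb : b ∈ D.grade j) (m : RepSpace g D) :
    P.defect b m = P.defect b (0, m.2) := by
  have h : m = (m.1, 0, 0) + (0, m.2) := by simp [Prod.ext_iff]
  conv_lhs => rw [h, map_add, defect_apply_inl hb, zero_add]

theorem defect_l (x : g) : P.defect (P.l x) = 0 := by
  refine LinearMap.ext fun m => ?_
  rw [defect_apply_eq (P.l_grade x), defect_apply, DGLA.parity_apply (P.l_grade x), P.d_l]
  simp [repDiff_apply, rep_l, actL_apply, bracket_l_J₀]

theorem defect_J₀_apply (y : g) (m : RepSpace g D) :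
    P.defect (P.J₀ y) m = (-m.2.2 • P.J₀ y, -⁅y, m.2.1⁆, 0) := by
  have hd : D.d (P.JDeriv 1 y m.2.1) = D.bracket (P.J₀ y) (P.J₀ m.2.1) := by
    simp [d_JDeriv, J_zero, JDeriv_zero]
  rw [defect_apply_eq (P.J₀_mem_grade y), defect_apply,
    DGLA.parity_apply (P.J₀_mem_grade y), P.d_J₀]
  simp [repDiff_apply, rep_J₀_apply, rep_apply_inl, rep_l, actL_apply, hd]

theorem defect_J_succ_diag (k : ℕ) (y : g) :
    P.defect (P.J (k + 1) fun _ => y) =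
      -((k : ℝ) + 2) • scalarMap (P.J (k + 1) fun _ => y) := by
  refine LinearMap.ext fun ⟨c, x, t⟩ => ?_
  have shift : ∑ s ∈ Finset.range (k + 1),
        D.bracket (P.J s fun _ => y) (P.JDeriv (k + 1 - s) y x) =
      ∑ s ∈ Finset.range (k + 1), D.bracket (P.J s fun _ => y) (P.JDeriv (k - s + 1) y x) :=
    Finset.sum_congr rfl fun s hs => by rw [tsub_add_eq_add_tsub (by grind)]
  have repDiff_rep : P.repDiff (P.rep (P.J (k + 1) fun _ => y) (0, x, t)) =
      (∑ s ∈ Finset.range (k + 1), D.bracket (P.J s fun _ => y) (P.JDeriv (k - s + 1) y x) +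
        D.bracket (P.J (k + 1) fun _ => y) (P.J₀ x), 0, 0) := by
    simp [rep_J_diag_apply, repDiff_apply, d_JDeriv, Finset.sum_range_succ _ (k + 1), shift,
      JDeriv_zero]
  have rep_repDiff : P.rep (P.J (k + 1) fun _ => y) (P.repDiff (0, x, t)) =
      (-D.bracket (P.J (k + 1) fun _ => y) (P.J₀ x), 0, 0) := by
    simp [rep_apply_inl, repDiff_apply]
  rw [defect_apply_eq (P.J_grade _ _), defect_apply, DGLA.parity_apply (P.J_grade _ _),
    neg_one_zpow_degree_J, map_smul]
  simp only [LinearMap.sub_apply, LinearMap.smul_apply, Module.End.mul_apply, repDiff_rep,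
    rep_repDiff, rep_d_J_apply, scalarMap_apply, Prod.smul_mk, Prod.mk_sub_mk, smul_zero, sub_zero]
  congr 1
  module

/-- The defect of `b`, corrected by `r` times the map sending `1` to `(-1)^j b`, where `j` is the
degree of `b`. -/
def defectResidue (r : ℝ) : D.carrier →ₗ[ℝ] Module.End ℝ (RepSpace g D) :=
  P.defect - r • scalarMap ∘ₗ D.parity

theorem defectResidue_apply {j : ℤ} {b : D.carrier} (hb : b ∈ D.grade j) (r : ℝ) :
    P.defectResidue r b = P.defect b - (r * (-1) ^ j) • scalarMap b := by
  simp [defectResidue, DGLA.parity_apply hb, smul_smul]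

theorem defectResidue_J_succ (k : ℕ) (v : Fin (k + 2) → g) :
    P.defectResidue (k + 2) (P.J (k + 1) v) = 0 := by
  have symm : IsSymmetricMultilinear
      ((P.defectResidue (k + 2)).compMultilinearMap (P.J (k + 1))) := fun v σ => by
    simp only [LinearMap.compMultilinearMap_apply, P.isSymmetricMultilinear_J _ v σ]
  refine symm.mem_of_forall_diag_mem (P := ⊥) (fun y => (Submodule.mem_bot ℝ).2 ?_) v
  rw [LinearMap.compMultilinearMap_apply, P.defectResidue_apply (P.J_grade _ _),
    defect_J_succ_diag, neg_one_zpow_degree_J]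
  module

theorem defectResidue_bracket {i j : ℤ} {a b : D.carrier} (ha : a ∈ D.grade i)
    (hb : b ∈ D.grade j) (r s : ℝ) :
    P.defectResidue (r + s) (D.bracket a b) =
      P.defectResidue r a * P.rep b + (-1 : ℝ) ^ i • (P.rep a * P.defectResidue s b) -
        (-1 : ℝ) ^ (i * j) • (P.defectResidue s b * P.rep a +
          (-1 : ℝ) ^ j • (P.rep b * P.defectResidue r a)) := by
  have hij := neg_one_zpow_mul_self (i * j)
  rw [P.defectResidue_apply (D.bracket_grade i j a ha b hb), P.defect_bracket ha hb,
    P.defectResidue_apply ha, P.defectResidue_apply hb]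
  simp only [mul_sub, sub_mul, mul_smul_comm, smul_mul_assoc, scalarMap_mul_rep, rep_mul_scalarMap,
    D.antisymm j i b hb a ha, mul_comm j i, map_smul, neg_smul, map_neg, neg_one_zpow_add]
  match_scalars <;> grind

/-- The filtration by weight of `D ⊕ g ⊕ ℝ`, with `g` in weight `1` and `ℝ` in weight `0`. -/
def repFiltration (n : ℤ) : Submodule ℝ (RepSpace g D) :=
  (DGLA.weightFiltration P.Generator n).prod
    ((if 1 ≤ n then ⊤ else ⊥ : Submodule ℝ g).prod (if 0 ≤ n then ⊤ else ⊥ : Submodule ℝ ℝ))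

variable {P} in
theorem mem_repFiltration {n : ℤ} {m : RepSpace g D} :
    m ∈ P.repFiltration n ↔ m.1 ∈ DGLA.weightFiltration P.Generator n ∧
      (m.2.1 ≠ 0 → 1 ≤ n) ∧ (m.2.2 ≠ 0 → 0 ≤ n) := by
  simp only [repFiltration, Submodule.mem_prod]
  split_ifs <;> simp [*]

theorem repFiltration_mono : Monotone P.repFiltration := fun _ _ hmn m hm => by
  obtain ⟨h1, h2, h3⟩ := mem_repFiltration.1 hm
  exact mem_repFiltration.2
    ⟨DGLA.weightFiltration_mono hmn h1, fun h => (h2 h).trans hmn, fun h => (h3 h).trans hmn⟩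

variable {P}

theorem scalarMap_mem_filteredEnd {n : ℤ} {b : D.carrier}
    (hb : b ∈ DGLA.weightFiltration P.Generator n) :
    scalarMap b ∈ filteredEnd P.repFiltration n := by
  refine mem_filteredEnd.2 fun k m hm => mem_repFiltration.2 ⟨?_, by simp [scalarMap_apply]⟩
  obtain ⟨-, -, ht⟩ := mem_repFiltration.1 hm
  rw [scalarMap_apply]
  rcases eq_or_ne m.2.2 0 with h0 | h0
  · simp [h0]
  · exact Submodule.smul_mem _ _ (DGLA.weightFiltration_mono (by grind) hb)

theorem Generator.rep_mem_filteredEnd {n j : ℤ} {b : D.carrier} (hb : P.Generator n j b) :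
    P.rep b ∈ filteredEnd P.repFiltration n := by
  refine mem_filteredEnd.2 fun r m hm => ?_
  obtain ⟨hc, hx, ht⟩ := mem_repFiltration.1 hm
  have bracket_mem := DGLA.bracket_generator_mem hb hc
  rw [mem_repFiltration]
  rcases hb with x | ⟨k, v⟩
  · rw [rep_l, actL_apply]
    refine ⟨by simpa only [add_comm r] using bracket_mem, fun h => ?_, by simp⟩
    have := hx (by rintro h0; simp [h0] at h)
    lia
  · rw [rep_J, actJ_apply, add_comm r]
    refine ⟨add_mem bracket_mem (Submodule.smul_mem _ _ ?_), fun h => ?_, by simp⟩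
    · rcases eq_or_ne m.2.1 0 with h0 | h0
      · rw [(P.J (k + 1)).map_coord_zero (Fin.last _) (by simp [h0])]
        exact zero_mem _
      · have := hx h0
        exact DGLA.weightFiltration_mono (by push_cast; lia)
          (DGLA.Monomial.of (Generator.J (k + 1) _)).mem_weightFiltration
    · rcases k with _ | k
      · have := ht (by rintro h0; simp [h0] at h)
        grind
      · simp at h

theorem rep_mem_filteredEnd {n j : ℤ} {b : D.carrier} (hb : D.Monomial P.Generator n j b) :
    P.rep b ∈ filteredEnd P.repFiltration n := by
  induction hb with
  | of ha => exact ha.rep_mem_filteredEnd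
  | bracket ha hb ih =>
    rw [P.rep_bracket ha.mem_grade (hb.mem_grade Generator.mem_grade)]
    exact sub_mem (mul_mem_filteredEnd rfl ha.rep_mem_filteredEnd ih)
      (Submodule.smul_mem _ _ (mul_mem_filteredEnd (add_comm _ _) ih ha.rep_mem_filteredEnd))

theorem Generator.defectResidue_mem {n j : ℤ} {b : D.carrier} (hb : P.Generator n j b) :
    P.defectResidue n b ∈ filteredEnd P.repFiltration (n - 1) := by
  rcases hb with x | ⟨_ | k, v⟩
  · simp [P.defectResidue_apply (P.l_grade x), defect_l]
  · refine mem_filteredEnd.2 fun r m hm => mem_repFiltration.2 ?_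
    have hx := (mem_repFiltration.1 hm).2.1
    have residue : P.defectResidue 1 (P.J₀ (v 0)) m = (0, -⁅v 0, m.2.1⁆, 0) := by
      rw [P.defectResidue_apply (P.J₀_mem_grade _), LinearMap.sub_apply, defect_J₀_apply]
      simp [scalarMap_apply]
    simp only [J_zero, Nat.cast_zero, zero_add, Int.cast_one, residue, sub_self, add_zero,
      zero_mem, true_and, ne_eq, not_true_eq_false, IsEmpty.forall_iff, and_true]
    exact fun h => hx fun h0 => h (by simp [h0])
  · have residue := P.defectResidue_J_succ k v
    have weight : (((k + 1 : ℕ) + 1 : ℤ) : ℝ) = k + 2 := by push_cast; ring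
    rw [weight, residue]
    exact zero_mem _

theorem defectResidue_mem_of_monomial {n j : ℤ} {b : D.carrier}
    (hb : D.Monomial P.Generator n j b) :
    P.defectResidue n b ∈ filteredEnd P.repFiltration (n - 1) := by
  induction hb with
  | of ha => exact ha.defectResidue_mem
  | bracket ha hb ih =>
    have rep_a := ha.rep_mem_filteredEnd
    have rep_b := rep_mem_filteredEnd hb
    have residue_a := ha.defectResidue_mem
    rw [Int.cast_add,
      P.defectResidue_bracket ha.mem_grade (hb.mem_grade Generator.mem_grade)]
    refine sub_mem (add_mem ?_ (Submodule.smul_mem _ _ ?_))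
      (Submodule.smul_mem _ _ (add_mem ?_ (Submodule.smul_mem _ _ ?_)))
    exacts [mul_mem_filteredEnd (by ring) residue_a rep_b,
      mul_mem_filteredEnd (by ring) rep_a ih, mul_mem_filteredEnd (by ring) ih rep_a,
      mul_mem_filteredEnd (by ring) rep_b residue_a]

theorem defectResidue_mem {n : ℤ} {b : D.carrier}
    (hb : b ∈ DGLA.weightFiltration P.Generator n) :
    P.defectResidue n b ∈ filteredEnd P.repFiltration (n - 1) := by
  refine DGLA.weightFiltration_le
    (Q := (filteredEnd P.repFiltration (n - 1)).comap (P.defectResidue n))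
    (fun m hm j b hb => ?_) hb
  have residue := defectResidue_mem_of_monomial hb
  rcases hm.eq_or_lt with rfl | hlt
  · exact residue
  have hgrade := hb.mem_grade Generator.mem_grade
  have shift : P.defectResidue n b =
      P.defectResidue m b - (((n : ℝ) - m) * (-1) ^ j) • scalarMap b := by
    rw [P.defectResidue_apply hgrade, P.defectResidue_apply hgrade]
    module
  rw [Submodule.mem_comap, shift]
  have mono := filteredEnd_mono P.repFiltration_mono
  exact sub_mem (mono (by lia) residue) (Submodule.smul_mem _ _
    (mono (by lia) (scalarMap_mem_filteredEnd hb.mem_weightFiltration)))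

/-! ### The contracting homotopy -/

variable (P)

/-- The contracting homotopy up to weight: the `D`-component of `± b • 1`, for the action of
`b ∈ Dg` on `1 ∈ ℝ ⊆ D ⊕ g ⊕ ℝ`. -/
def homotopy : D.carrier →ₗ[ℝ] D.carrier :=
  LinearMap.fst ℝ _ _ ∘ₗ LinearMap.applyₗ ((0, 0, 1) : RepSpace g D) ∘ₗ P.rep ∘ₗ D.parity

theorem homotopy_apply (b : D.carrier) :
    P.homotopy b = (P.rep (D.parity b) (0, 0, 1)).1 := rfl

theorem d_homotopy_add_homotopy_d (b : D.carrier) (r : ℝ) :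
    D.d (P.homotopy b) + P.homotopy (D.d b) - r • b =
      (P.defectResidue r (D.parity b) (0, 0, 1)).1 +
        P.J₀ (P.rep (D.parity b) (0, 0, 1)).2.1 := by
  simp only [homotopy_apply, defectResidue, defect_apply, DGLA.parity_d, DGLA.parity_parity,
    LinearMap.sub_apply, LinearMap.smul_apply, LinearMap.comp_apply, Module.End.mul_apply,
    repDiff_apply, scalarMap_apply, map_neg, LinearMap.neg_apply, map_zero, sub_zero,
    Prod.fst_sub, Prod.fst_neg, Prod.smul_fst, one_smul, Prod.mk_zero_zero]
  abel

variable {P}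

theorem J₀_mem_weightFiltration (y : g) : P.J₀ y ∈ DGLA.weightFiltration P.Generator 1 := by
  simpa [J_zero] using (DGLA.Monomial.of (Generator.J (P := P) 0 fun _ => y)).mem_weightFiltration

theorem d_homotopy_add_homotopy_d_sub_smul_mem {n : ℤ} (hn : 1 ≤ n) {b : D.carrier}
    (hb : b ∈ DGLA.weightFiltration P.Generator (n + 1)) :
    D.d (P.homotopy b) + P.homotopy (D.d b) - ((n : ℝ) + 1) • b ∈
      DGLA.weightFiltration P.Generator n := by
  have one_mem : ((0, 0, 1) : RepSpace g D) ∈ P.repFiltration 0 :=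
    mem_repFiltration.2 ⟨zero_mem _, by simp, by simp⟩
  have residue := mem_filteredEnd.1
    (defectResidue_mem (DGLA.parity_mem_weightFiltration Generator.mem_grade hb)) 0 _ one_mem
  rw [zero_add, add_sub_cancel_right, Int.cast_add, Int.cast_one] at residue
  rw [d_homotopy_add_homotopy_d]
  exact add_mem (mem_repFiltration.1 residue).1
    (DGLA.weightFiltration_mono hn (J₀_mem_weightFiltration _))

theorem exists_eq_l_add_J₀ {a : D.carrier} (ha : a ∈ DGLA.weightFiltration P.Generator 1) :
    ∃ x y, a = P.l x + P.J₀ y := by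
  have le : DGLA.weightFiltration P.Generator 1 ≤ LinearMap.range (P.l.coprod P.J₀) := by
    refine DGLA.weightFiltration_le fun m hm j b hb => ?_
    rcases P.monomial_weight_cases hb with ⟨-, x, rfl⟩ | ⟨-, y, rfl⟩ | h
    · exact ⟨(x, 0), by simp⟩
    · exact ⟨(0, y), by simp⟩
    · lia
  obtain ⟨⟨x, y⟩, rfl⟩ := le ha
  exact ⟨x, y, by simp⟩

theorem mem_range_d_of_weight_le_one {a : D.carrier}
    (ha : a ∈ DGLA.weightFiltration P.Generator 1) (hda : D.d a = 0) :
    a ∈ LinearMap.range D.d := by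
  obtain ⟨x, y, rfl⟩ := exists_eq_l_add_J₀ ha
  have hy : P.l y = 0 := by simpa [P.d_l, d_J₀] using hda
  have hy : y = 0 := P.l_injective (hy.trans (map_zero _).symm)
  exact ⟨P.J₀ x, by simp [d_J₀, hy]⟩

end DgPresentation

theorem Dg_isAcyclic_general (g : Type) [LieRing g] [LieAlgebra ℝ g]
    (D : DGLA) (P : DgPresentation g D) : D.IsAcyclic := by
  refine DGLA.isAcyclic_of_ker_le_range (ker_le_range_of_filtered_homotopy D.d_sq
    (F := fun n => DGLA.weightFiltration P.Generator (n + 1)) (c := fun n => (n : ℝ) + 2)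
    (h := P.homotopy) (fun a => ?_) (fun n => by positivity) (fun n a ha => ?_) fun a ha => ?_)
  · obtain ⟨n, hn⟩ := DGLA.exists_mem_weightFiltration DgPresentation.Generator.mem_grade
      P.lieSpan_generator a
    exact ⟨n.toNat, DGLA.weightFiltration_mono (by lia) hn⟩
  · have weight : (n : ℤ) + 1 + 1 = ((n + 1 : ℕ) : ℤ) + 1 := by push_cast; rfl
    have homotopy := DgPresentation.d_homotopy_add_homotopy_d_sub_smul_mem (by lia) (weight ▸ ha)
    simpa [add_assoc, one_add_one_eq_two] using homotopy
  · exact DgPresentation.mem_range_d_of_weight_le_one (by simpa using ha)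

/-- Theorem `prop:acyclic`.  For a finite-dimensional real Lie algebra `g`,
the DGLA `Dg = g ⋉ 𝓛(S⁺g)`, with differential determined by `d l(x) = 0` and
`d i(x) = [i(x), i(x)]/2 + l(x)`, is acyclic as a cochain complex. -/
theorem Dg_isAcyclic (g : Type) [LieRing g] [LieAlgebra ℝ g] [FiniteDimensional ℝ g]
    (D : DGLA) (P : DgPresentation g D) : D.IsAcyclic :=
  Dg_isAcyclic_general g D P
end
end

section
/- Let g be a finite-dimensional real Lie algebra. The cohomology of the free graded Lie algebra 𝓛(S⁺g) (generated by S⁺g=⊕_{n≥1}Sⁿg with deg Sⁿg=1−2n), equipped with the differential determined on generating functions by d i(x)=[i(x),i(x)]/2, is concentrated in degree −1 and is isomorphic to g=S¹g⊂S⁺g; that is, H^{−1}(𝓛(S⁺g))≅g and H^{−k}(𝓛(S⁺g))=0 for k≠1. -/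
noncomputable section

/-- A presentation of the free graded Lie algebra `𝓛(S⁺g)` generated by
`S⁺g = ⊕_{n≥1} Sⁿg` (with `deg Sⁿg = 1 − 2n`), equipped with the differential
determined on generating functions by `d i(x) = [i(x), i(x)]/2`, where
`i(x) = ∑_{k≥1} 𝓘(xᵏ)`.  The symmetric multilinear map `J k` encodes the
generators `𝓘(u)` for `u ∈ S^(k+1) g` via `J k (x, …, x) = 𝓘(x^(k+1))`. -/
structure FreeSgPresentation (g : Type) [LieRing g] [LieAlgebra ℝ g] (D : DGLA) where
  J : (k : ℕ) → MultilinearMap ℝ (fun _ : Fin (k + 1) => g) D.carrier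
  J_symm : ∀ (k : ℕ) (v : Fin (k + 1) → g) (σ : Equiv.Perm (Fin (k + 1))),
    J k (v ∘ σ) = J k v
  J_grade : ∀ (k : ℕ) (v : Fin (k + 1) → g), J k v ∈ D.grade (1 - 2 * ((k : ℤ) + 1))
  d_J_one : ∀ x : g, D.d (J 0 (fun _ => x)) = 0
  d_J : ∀ (k : ℕ) (x : g),
    D.d (J (k + 1) (fun _ => x)) =
      (1 / 2 : ℝ) • ∑ s ∈ Finset.range (k + 1),
        D.bracket (J s (fun _ => x)) (J (k - s) (fun _ => x))
  generates : D.lieSpan {a | ∃ (k : ℕ) (v : Fin (k + 1) → g), a = J k v} = ⊤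
  free : ∀ (B : DGLA)
      (J' : (k : ℕ) → MultilinearMap ℝ (fun _ : Fin (k + 1) => g) B.carrier),
      (∀ (k : ℕ) (v : Fin (k + 1) → g) (σ : Equiv.Perm (Fin (k + 1))), J' k (v ∘ σ) = J' k v) →
      (∀ (k : ℕ) (v : Fin (k + 1) → g), J' k v ∈ B.grade (1 - 2 * ((k : ℤ) + 1))) →
      ∃! φ : D.carrier →ₗ[ℝ] B.carrier,
        (∀ a b, φ (D.bracket a b) = B.bracket (φ a) (φ b)) ∧
        (∀ (n : ℤ), ∀ a ∈ D.grade n, φ a ∈ B.grade n) ∧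
        (∀ (k : ℕ) (v : Fin (k + 1) → g), φ (J k v) = J' k v)

/-!
In a basis of `g`, the equation `d i(x) = [i(x), i(x)] / 2` says that the differential sends the
coefficient of `x^α` to half the sum of the brackets of the coefficients of `x^β` and `x^γ` over
`β + γ = α`. Hence `𝓛(S⁺g)` maps to the cobar construction of the symmetric coalgebra, the free
associative algebra on the monomials of positive degree.

The cohomology of the cobar construction is represented by words in the monomials `x_i` of degree
one. Indeed, call a monomial *stripped* of a set of variables if it involves none of them. Working
modulo words whose first letter is stripped of a growing set `s` of variables, multiplication of
the first letter by `x_i` is a homotopy whose commutator with the differential is left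
multiplication by the letter `x_i`. An induction on the degree and on `s` therefore makes a
cocycle cohomologous to one whose first letter is stripped of all variables, that is, to zero.

By Dynkin, Specht and Wever, the operator `α₁ ⋯ αₙ ↦ |αₙ| [α₁, [α₂, …, αₙ]]`, divided by the total
polynomial degree, retracts the cobar construction onto `𝓛(S⁺g)`. It commutes with the differential,
so the cohomology of `𝓛(S⁺g)` is represented by iterated brackets of the generators `x_i`. Since
`[x_i, x_j]` is a multiple of the differential of the generator `x_i x_j`, all brackets of length at
least two are exact, and only the span `g` of the `x_i` survives. It injects into the cohomology
because every word in the image of the cobar differential has length at least two.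
-/

namespace DGLA

variable {D : DGLA}

lemma lieSpan_le {S : Set D.carrier} {p : Submodule ℝ D.carrier} (hS : S ⊆ p)
    (hp : ∀ a ∈ p, ∀ b ∈ p, D.bracket a b ∈ p) : D.lieSpan S ≤ p :=
  sInf_le ⟨hS, hp⟩

lemma subset_lieSpan {S : Set D.carrier} : S ⊆ D.lieSpan S := fun _ ha =>
  Submodule.mem_sInf.2 fun _ hp => hp.1 ha

lemma lieSpan_le_lieSpan {S S' : Set D.carrier} (h : S ⊆ D.lieSpan S') :
    D.lieSpan S ≤ D.lieSpan S' :=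
  le_sInf fun p hp => lieSpan_le (fun _ ha => (sInf_le hp : D.lieSpan S' ≤ p) (h ha)) hp.2

lemma span_eq_top_of_bracket_mem {S H : Set D.carrier} (hS : D.lieSpan S = ⊤) (hSH : S ⊆ H)
    (hH : ∀ a ∈ H, ∀ b ∈ H, D.bracket a b ∈ H) : Submodule.span ℝ H = ⊤ := by
  refine top_le_iff.1 (hS ▸ lieSpan_le (hSH.trans Submodule.subset_span) fun a ha b hb => ?_)
  exact LinearMap.BilinMap.apply_apply_mem_of_mem_span _ H H D.bracket
    (fun a ha b hb => Submodule.subset_span (hH a ha b hb)) a b ha hb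

lemma map_d_of_lieSpan_eq_top {B : DGLA} {S : Set D.carrier} (hS : D.lieSpan S = ⊤)
    (hhom : ∀ a ∈ S, ∃ n, a ∈ D.grade n) {φ : D.carrier →ₗ[ℝ] B.carrier}
    (hbracket : ∀ a b, φ (D.bracket a b) = B.bracket (φ a) (φ b))
    (hgrade : ∀ n, ∀ a ∈ D.grade n, φ a ∈ B.grade n)
    (hd : ∀ a ∈ S, φ (D.d a) = B.d (φ a)) (a : D.carrier) : φ (D.d a) = B.d (φ a) := by
  have hspan : Submodule.span ℝ {a | (∃ n, a ∈ D.grade n) ∧ φ (D.d a) = B.d (φ a)} = ⊤ := by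
    refine span_eq_top_of_bracket_mem hS (fun a ha => ⟨hhom a ha, hd a ha⟩) ?_
    rintro a ⟨⟨i, ha⟩, hda⟩ b ⟨⟨j, hb⟩, hdb⟩
    refine ⟨⟨i + j, D.bracket_grade i j a ha b hb⟩, ?_⟩
    rw [D.leibniz i a ha, map_add, map_smul, hbracket, hbracket, hbracket, hda, hdb,
      B.leibniz i _ (hgrade i a ha)]
  exact LinearMap.congr_fun (LinearMap.ext_on (f := φ ∘ₗ D.d) (g := B.d ∘ₗ φ) hspan
    fun a ha => ha.2) a

lemma mem_exact_of_d_eq {n : ℤ} {a b : D.carrier} (hb : b ∈ D.grade (n - 1)) (h : D.d b = a) :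
    a ∈ D.exact n :=
  ⟨by simpa [← h] using D.d_grade _ b hb, b, hb, h⟩

lemma bracket_mem_exact {i j : ℤ} {a b : D.carrier} (ha : a ∈ D.closed i) (hb : b ∈ D.exact j) :
    D.bracket a b ∈ D.exact (i + j) := by
  obtain ⟨hai, had : D.d a = 0⟩ := ha
  obtain ⟨-, c, hc, rfl⟩ := hb
  refine mem_exact_of_d_eq (b := (-1 : ℝ) ^ i • D.bracket a c) ?_ ?_
  · rw [add_sub_assoc]
    exact Submodule.smul_mem _ _ (D.bracket_grade _ _ a hai c hc)
  · rw [map_smul, D.leibniz i a hai, had, map_zero, LinearMap.zero_apply, zero_add, smul_smul,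
      ← mul_zpow, neg_one_mul, neg_neg, one_zpow, one_smul]

end DGLA

namespace FreeLieCohomology

open Finset.HasAntidiagonal (antidiagonal mem_antidiagonal)

section Words

variable (R : Type*) [CommRing R] {X : Type*}

/-- The monomial of the free associative algebra spelled by a word in the generators. -/
def word (w : List X) : FreeAlgebra R X := (w.map (FreeAlgebra.ι R)).prod

@[simp] lemma word_nil : word R ([] : List X) = 1 := rfl

@[simp] lemma word_cons (x : X) (w : List X) :
    word R (x :: w) = FreeAlgebra.ι R x * word R w := by
  simp [word]

lemma word_append (v w : List X) : word R (v ++ w) = word R v * word R w := by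
  simp [word]

variable (X) in
/-- The basis of words of the free associative algebra. -/
def wordBasis : Module.Basis (List X) R (FreeAlgebra R X) :=
  (FreeAlgebra.basisFreeMonoid R X).reindex FreeMonoid.toList

@[simp] lemma wordBasis_apply (w : List X) : wordBasis R X w = word R w := by
  simp [wordBasis, FreeAlgebra.basisFreeMonoid, FreeAlgebra.equivMonoidAlgebraFreeMonoid, word,
    FreeMonoid.lift_apply]

/-- The span of a set of words, used for all gradings and filtrations of the free algebra. -/
def wordSpan (S : Set (List X)) : Submodule R (FreeAlgebra R X) :=
  Submodule.span R (word R '' S)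

variable {R} {M : Type*} [AddCommGroup M] [Module R M] {S S' : Set (List X)} {t u : FreeAlgebra R X}

lemma word_mem_wordSpan {w : List X} (hw : w ∈ S) : word R w ∈ wordSpan R S :=
  Submodule.subset_span ⟨w, hw, rfl⟩

lemma wordSpan_le {p : Submodule R (FreeAlgebra R X)} : wordSpan R S ≤ p ↔ ∀ w ∈ S, word R w ∈ p :=
  Submodule.span_le.trans Set.forall_mem_image

lemma wordSpan_mono (h : S ⊆ S') : wordSpan R S ≤ wordSpan R S' :=
  Submodule.span_mono (Set.image_mono h)

lemma image_wordBasis (S : Set (List X)) : wordBasis R X '' S = word R '' S :=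
  Set.image_congr fun w _ => wordBasis_apply R w

@[simp] lemma wordSpan_univ : wordSpan R (Set.univ : Set (List X)) = ⊤ := by
  rw [wordSpan, ← image_wordBasis, Set.image_univ, (wordBasis R X).span_eq]

lemma map_mem_of_mem_wordSpan {p : Submodule R M} {f : FreeAlgebra R X →ₗ[R] M}
    (hf : ∀ w ∈ S, f (word R w) ∈ p) (ht : t ∈ wordSpan R S) : f t ∈ p :=
  (wordSpan_le (p := p.comap f)).2 hf ht

lemma eqOn_wordSpan {f f' : FreeAlgebra R X →ₗ[R] M} (h : ∀ w ∈ S, f (word R w) = f' (word R w))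
    (ht : t ∈ wordSpan R S) : f t = f' t :=
  (wordSpan_le (p := LinearMap.eqLocus f f')).2 h ht

lemma linearMap_ext_word {f f' : FreeAlgebra R X →ₗ[R] M}
    (h : ∀ w, f (word R w) = f' (word R w)) : f = f' :=
  (wordBasis R X).ext fun w => by simpa using h w

lemma mem_wordSpan_inter (h : t ∈ wordSpan R S) (h' : t ∈ wordSpan R S') :
    t ∈ wordSpan R (S ∩ S') := by
  simp only [wordSpan, ← image_wordBasis, (wordBasis R X).mem_span_image] at h h' ⊢
  exact Set.subset_inter h h'

lemma wordSpan_union (S S' : Set (List X)) :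
    wordSpan R (S ∪ S') = wordSpan R S ⊔ wordSpan R S' := by
  rw [wordSpan, Set.image_union, Submodule.span_union, wordSpan, wordSpan]

lemma mul_mem_wordSpan {S'' : Set (List X)} (h : ∀ v ∈ S, ∀ w ∈ S', v ++ w ∈ S'')
    (ht : t ∈ wordSpan R S) (hu : u ∈ wordSpan R S') : t * u ∈ wordSpan R S'' := by
  refine Submodule.mul_le.1 ?_ t ht u hu
  rw [wordSpan, wordSpan, Submodule.span_mul_span]
  refine Submodule.span_le.2 ?_
  rintro _ ⟨_, ⟨v, hv, rfl⟩, _, ⟨w, hw, rfl⟩, rfl⟩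
  simpa only [word_append, SetLike.mem_coe] using word_mem_wordSpan (R := R) (h v hv w hw)

lemma isInternal_wordSpan_fiber {ι : Type*} [DecidableEq ι] (deg : List X → ι) :
    DirectSum.IsInternal fun i => wordSpan R {w | deg w = i} := by
  refine DirectSum.isInternal_submodule_of_iSupIndep_of_iSup_eq_top (fun i => ?_) ?_
  · have hsup : ⨆ j, ⨆ (_ : j ≠ i), wordSpan R {w | deg w = j} ≤ wordSpan R {w | deg w = i}ᶜ :=
      iSup₂_le fun j hj => wordSpan_mono fun w hw => by
        rintro rfl
        exact hj hw.symm
    refine Disjoint.mono_right hsup ?_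
    simp only [wordSpan, ← image_wordBasis]
    exact (wordBasis R X).linearIndependent.disjoint_span_image disjoint_compl_right
  · refine eq_top_iff.2 ?_
    rw [← wordSpan_univ, wordSpan_le]
    exact fun w _ => Submodule.mem_iSup_of_mem (deg w) (word_mem_wordSpan rfl)

variable (f : X → FreeAlgebra R X)

/-- The values of `mapHead` on words. -/
def mapHeadWord : List X → FreeAlgebra R X
  | [] => 0
  | x :: w => f x * word R w

/-- The linear map replacing the first letter `x` of every word by `f x`; it kills the empty
word. -/
def mapHead : FreeAlgebra R X →ₗ[R] FreeAlgebra R X :=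
  (wordBasis R X).constr R (mapHeadWord f)

lemma mapHead_word (w : List X) : mapHead f (word R w) = mapHeadWord f w := by
  rw [mapHead, ← wordBasis_apply, Module.Basis.constr_basis]

@[simp] lemma mapHead_one : mapHead f 1 = 0 := by
  rw [← word_nil, mapHead_word, mapHeadWord]

@[simp] lemma mapHead_ι_mul (x : X) (t : FreeAlgebra R X) :
    mapHead f (FreeAlgebra.ι R x * t) = f x * t := by
  have h : mapHead f ∘ₗ LinearMap.mulLeft R (FreeAlgebra.ι R x) = LinearMap.mulLeft R (f x) := by
    refine linearMap_ext_word fun w => ?_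
    rw [LinearMap.comp_apply, LinearMap.mulLeft_apply, ← word_cons, mapHead_word, mapHeadWord,
      LinearMap.mulLeft_apply]
  exact LinearMap.congr_fun h t

end Words

section OddDerivation

variable {R : Type*} [CommRing R] {X : Type*} (δ : X → FreeAlgebra R X)

/-- The values of `oddDerivation` on words. -/
def oddDerivationWord : List X → FreeAlgebra R X
  | [] => 0
  | x :: w => δ x * word R w - FreeAlgebra.ι R x * oddDerivationWord w

/-- The derivation of the free algebra with prescribed values on the generators, all of which are
regarded as odd. -/
def oddDerivation : FreeAlgebra R X →ₗ[R] FreeAlgebra R X :=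
  (wordBasis R X).constr R (oddDerivationWord δ)

lemma oddDerivation_word (w : List X) : oddDerivation δ (word R w) = oddDerivationWord δ w := by
  rw [oddDerivation, ← wordBasis_apply, Module.Basis.constr_basis]

@[simp] lemma oddDerivation_one : oddDerivation δ 1 = 0 := by
  rw [← word_nil, oddDerivation_word, oddDerivationWord]

@[simp] lemma oddDerivation_ι_mul (x : X) (t : FreeAlgebra R X) :
    oddDerivation δ (FreeAlgebra.ι R x * t) = δ x * t - FreeAlgebra.ι R x * oddDerivation δ t := by
  have h : oddDerivation δ ∘ₗ LinearMap.mulLeft R (FreeAlgebra.ι R x) =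
      LinearMap.mulLeft R (δ x) - LinearMap.mulLeft R (FreeAlgebra.ι R x) ∘ₗ oddDerivation δ := by
    refine linearMap_ext_word fun w => ?_
    simp only [LinearMap.comp_apply, LinearMap.mulLeft_apply, LinearMap.sub_apply]
    rw [← word_cons, oddDerivation_word, oddDerivation_word, oddDerivationWord]
  exact LinearMap.congr_fun h t

lemma oddDerivation_word_mul (w : List X) (t : FreeAlgebra R X) :
    oddDerivation δ (word R w * t) =
      oddDerivation δ (word R w) * t + (-1) ^ w.length * (word R w * oddDerivation δ t) := by
  induction w with
  | nil => simp
  | cons x w ih =>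
    rw [word_cons, mul_assoc, oddDerivation_ι_mul, ih, oddDerivation_ι_mul, List.length_cons,
      pow_succ]
    rcases neg_one_pow_eq_or (FreeAlgebra R X) w.length with h | h <;> rw [h] <;> noncomm_ring

lemma oddDerivation_even_mul {s : FreeAlgebra R X} (hs : s ∈ wordSpan R {w | Even w.length})
    (t : FreeAlgebra R X) :
    oddDerivation δ (s * t) = oddDerivation δ s * t + s * oddDerivation δ t := by
  have h (w : List X) (hw : w ∈ {w : List X | Even w.length}) :
      (oddDerivation δ ∘ₗ LinearMap.mulRight R t) (word R w) =
        (LinearMap.mulRight R t ∘ₗ oddDerivation δ +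
          LinearMap.mulRight R (oddDerivation δ t)) (word R w) := by
    simp [oddDerivation_word_mul, Even.neg_one_pow hw]
  exact eqOn_wordSpan h hs

lemma oddDerivation_comp_self (heven : ∀ x, δ x ∈ wordSpan R {w | Even w.length})
    (hδ : ∀ x, oddDerivation δ (δ x) = 0) : oddDerivation δ ∘ₗ oddDerivation δ = 0 := by
  refine linearMap_ext_word fun w => ?_
  induction w with
  | nil => simp
  | cons x w ih =>
    rw [LinearMap.comp_apply, LinearMap.zero_apply] at ih ⊢
    rw [word_cons, oddDerivation_ι_mul, map_sub, oddDerivation_even_mul δ (heven x),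
      oddDerivation_ι_mul, hδ, ih]
    simp

end OddDerivation

section Cobar

variable (R : Type*) [CommRing R] {κ : Type*}

variable (κ) in
/-- The nonzero multi-indices, which label the monomials of positive degree in the variables
`κ`. -/
abbrev Letter := {α : κ →₀ ℕ // α ≠ 0}

variable (κ) in
/-- The free associative algebra on the monomials of positive degree: the underlying algebra of the
cobar construction of the symmetric coalgebra. -/
abbrev Cobar := FreeAlgebra R (Letter κ)

/-- The total polynomial degree of a word of monomials. -/
def weight (w : List (Letter κ)) : ℕ := (w.map fun α => α.1.degree).sum

@[simp] lemma weight_nil : weight ([] : List (Letter κ)) = 0 := rfl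

@[simp] lemma weight_cons (α : Letter κ) (w : List (Letter κ)) :
    weight (α :: w) = α.1.degree + weight w := by
  simp [weight]

@[simp] lemma weight_append (v w : List (Letter κ)) : weight (v ++ w) = weight v + weight w := by
  simp [weight]

lemma one_le_degree (α : Letter κ) : 1 ≤ α.1.degree :=
  Nat.one_le_iff_ne_zero.2 fun h => α.2 ((Finsupp.degree_eq_zero_iff _).1 h)

lemma length_le_weight (w : List (Letter κ)) : w.length ≤ weight w := by
  induction w with
  | nil => simp
  | cons α w ih =>
    have := one_le_degree α
    simp only [List.length_cons, weight_cons]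
    lia

/-- The generator of the cobar construction with index `α`, extended by zero to `α = 0`. -/
def letter (α : κ →₀ ℕ) : Cobar R κ :=
  open Classical in if h : α = 0 then 0 else FreeAlgebra.ι R ⟨α, h⟩

@[simp] lemma letter_zero : letter R (0 : κ →₀ ℕ) = 0 := by simp [letter]

lemma letter_of_ne_zero {α : κ →₀ ℕ} (h : α ≠ 0) : letter R α = FreeAlgebra.ι R ⟨α, h⟩ := by
  simp [letter, h]

lemma ι_eq_letter (α : Letter κ) : FreeAlgebra.ι R α = letter R α.1 :=
  (letter_of_ne_zero R α.2).symm

lemma word_cons_letter (α : Letter κ) (w : List (Letter κ)) :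
    word R (α :: w) = letter R α.1 * word R w := by
  rw [word_cons, ι_eq_letter]

variable {R}

lemma letter_mem_wordSpan {S : Set (List (Letter κ))} {α : κ →₀ ℕ}
    (h : ∀ hα : α ≠ 0, [⟨α, hα⟩] ∈ S) : letter R α ∈ wordSpan R S := by
  rcases eq_or_ne α 0 with rfl | hα
  · rw [letter_zero]
    exact Submodule.zero_mem _
  · simpa [letter_of_ne_zero R hα] using word_mem_wordSpan (R := R) (h hα)

variable (R) [DecidableEq κ]

/-- The reduced coproduct of the symmetric coalgebra, written as a quadratic element of the cobar
construction: the terms with `p.1 = 0` or `p.2 = 0` vanish. -/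
def reducedCoproduct (α : κ →₀ ℕ) : Cobar R κ :=
  ∑ p ∈ antidiagonal α, letter R p.1 * letter R p.2

@[simp] lemma reducedCoproduct_zero : reducedCoproduct R (0 : κ →₀ ℕ) = 0 := by
  simp [reducedCoproduct]

lemma reducedCoproduct_mem_wordSpan (α : κ →₀ ℕ) :
    reducedCoproduct R α ∈
      wordSpan R {w | weight w = α.degree ∧ w.length = 2} := by
  refine Submodule.sum_mem _ fun p hp => ?_
  refine mul_mem_wordSpan (S := {w | ∃ h, w = [⟨p.1, h⟩]}) (S' := {w | ∃ h, w = [⟨p.2, h⟩]}) ?_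
    (letter_mem_wordSpan fun h => ⟨h, rfl⟩) (letter_mem_wordSpan fun h => ⟨h, rfl⟩)
  rintro _ ⟨_, rfl⟩ _ ⟨_, rfl⟩
  simp [← mem_antidiagonal.1 hp]

@[simp] lemma reducedCoproduct_single (i : κ) :
    reducedCoproduct R (Finsupp.single i 1) = 0 := by
  simp [reducedCoproduct, Finsupp.antidiagonal_single, Finset.Nat.antidiagonal_succ]

-- Both sides are coefficients of `L * L * L`, where `L = ∑ letter α * x ^ α`.
lemma reducedCoproduct_coassoc (α : κ →₀ ℕ) :
    ∑ p ∈ antidiagonal α, reducedCoproduct R p.1 * letter R p.2 =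
      ∑ p ∈ antidiagonal α, letter R p.1 * reducedCoproduct R p.2 := by
  let L : MvPowerSeries κ (Cobar R κ) := letter R
  have hL (β : κ →₀ ℕ) : MvPowerSeries.coeff β L = letter R β := rfl
  simpa only [MvPowerSeries.coeff_mul, hL, reducedCoproduct] using
    congrArg (MvPowerSeries.coeff α) (mul_assoc L L L)

/-- The cobar differential `letter α ↦ ∑ letter β * letter γ`, summed over `β + γ = α`. -/
def cobarD : Cobar R κ →ₗ[R] Cobar R κ :=
  oddDerivation fun α => reducedCoproduct R α.1

variable {R}

@[simp] lemma cobarD_one : cobarD R (1 : Cobar R κ) = 0 := oddDerivation_one _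

lemma cobarD_letter_mul (α : κ →₀ ℕ) (t : Cobar R κ) :
    cobarD R (letter R α * t) = reducedCoproduct R α * t - letter R α * cobarD R t := by
  rcases eq_or_ne α 0 with rfl | hα
  · simp
  · rw [letter_of_ne_zero R hα]
    exact oddDerivation_ι_mul _ _ t

@[simp] lemma cobarD_letter (α : κ →₀ ℕ) : cobarD R (letter R α) = reducedCoproduct R α := by
  simpa using cobarD_letter_mul α (1 : Cobar R κ)

lemma cobarD_letter_single_mul (i : κ) (t : Cobar R κ) :
    cobarD R (letter R (Finsupp.single i 1) * t) =
      -(letter R (Finsupp.single i 1) * cobarD R t) := by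
  simp [cobarD_letter_mul]

lemma cobarD_reducedCoproduct (α : κ →₀ ℕ) : cobarD R (reducedCoproduct R α) = 0 := by
  rw [reducedCoproduct, map_sum]
  simp only [cobarD_letter_mul, cobarD_letter, Finset.sum_sub_distrib]
  rw [reducedCoproduct_coassoc, sub_self]

@[simp] lemma cobarD_cobarD (t : Cobar R κ) : cobarD R (cobarD R t) = 0 := by
  have heven (α : Letter κ) : reducedCoproduct R α.1 ∈ wordSpan R {w | Even w.length} :=
    wordSpan_mono (fun w hw => by simp [hw.2]) (reducedCoproduct_mem_wordSpan R α.1)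
  exact LinearMap.congr_fun
    (oddDerivation_comp_self _ heven fun α => cobarD_reducedCoproduct α.1) t

end Cobar

section Weight

variable {R : Type*} [CommRing R] {κ : Type*} [DecidableEq κ]

lemma cobarD_word_mem_wordSpan (w : List (Letter κ)) :
    cobarD R (word R w) ∈
      wordSpan R {u | weight u = weight w ∧ u.length = w.length + 1} := by
  induction w with
  | nil => simp
  | cons α w ih =>
    rw [word_cons_letter, cobarD_letter_mul]
    refine Submodule.sub_mem _ ?_ ?_
    · refine mul_mem_wordSpan (S' := {w}) ?_ (reducedCoproduct_mem_wordSpan R α.1)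
        (word_mem_wordSpan rfl)
      rintro v ⟨hv, hlen⟩ _ rfl
      simp [hv, hlen, add_comm 2]
    · refine mul_mem_wordSpan (S := {[α]}) ?_ (letter_mem_wordSpan fun _ => rfl) ih
      rintro _ rfl v ⟨hv, hlen⟩
      simp [hv, hlen]

lemma cobarD_mem_wordSpan {S S' : Set (List (Letter κ))}
    (h : ∀ w ∈ S, ∀ u, weight u = weight w → u.length = w.length + 1 → u ∈ S')
    {t : Cobar R κ} (ht : t ∈ wordSpan R S) : cobarD R t ∈ wordSpan R S' :=
  map_mem_of_mem_wordSpan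
    (fun w hw => wordSpan_mono (fun u hu => h w hw u hu.1 hu.2) (cobarD_word_mem_wordSpan w)) ht

end Weight

section Acyclicity

lemma sum_antidiagonal_add {A M : Type*} [AddCommMonoid A] [IsRightCancelAdd A] [PartialOrder A]
    [CanonicallyOrderedAdd A] [DecidableLE A] [Finset.HasAntidiagonal A] [AddCommMonoid M]
    (a c : A) (F : A × A → M) :
    ∑ p ∈ antidiagonal (a + c), F p =
      ∑ p ∈ antidiagonal a, F (p.1 + c, p.2) + ∑ p ∈ antidiagonal (a + c) with ¬c ≤ p.1, F p := by
  rw [← Finset.sum_filter_add_sum_filter_not _ fun p : A × A => c ≤ p.1]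
  congr 1
  symm
  refine Finset.sum_nbij (fun p => (p.1 + c, p.2)) ?_ ?_ ?_ fun _ _ => rfl
  · intro p hp
    rw [mem_antidiagonal] at hp
    simpa [← hp] using add_right_comm p.1 c p.2
  · intro p _ q _ h
    simpa [Prod.ext_iff] using h
  · rintro ⟨x, y⟩ hxy
    simp only [Finset.coe_filter, mem_antidiagonal, Set.mem_ofPred_eq] at hxy
    obtain ⟨z, rfl⟩ := le_iff_exists_add'.1 hxy.2
    refine ⟨(z, y), ?_, rfl⟩
    simpa [add_right_comm _ c] using hxy.1

variable {R : Type*} [CommRing R] {κ : Type*}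

/-- The nonempty words whose first letter involves none of the variables in `s`. -/
def headAvoiding (s : Finset κ) : Set (List (Letter κ)) :=
  {w | ∃ α v, w = α :: v ∧ ∀ j ∈ s, α.1 j = 0}

/-- The words of cohomological degree `-p` whose weight exceeds their length by at least `e`. -/
def excessAtLeast (p e : ℕ) : Set (List (Letter κ)) :=
  {w | 2 * weight w = w.length + p ∧ w.length + e ≤ weight w}

lemma letter_mul_mem_headAvoiding {s : Finset κ} {β : κ →₀ ℕ} (h : ∀ j ∈ s, β j = 0)
    (t : Cobar R κ) : letter R β * t ∈ wordSpan R (headAvoiding s) := by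
  refine mul_mem_wordSpan (S := {w | ∃ hβ, w = [⟨β, hβ⟩]}) (S' := Set.univ) ?_
    (letter_mem_wordSpan fun hβ => ⟨hβ, rfl⟩) (wordSpan_univ (R := R) ▸ Submodule.mem_top)
  rintro _ ⟨hβ, rfl⟩ w _
  exact ⟨⟨β, hβ⟩, w, rfl, h⟩

lemma headAvoiding_anti {s s' : Finset κ} (h : s ⊆ s') : headAvoiding s' ⊆ headAvoiding s := by
  rintro _ ⟨α, w, rfl, hα⟩
  exact ⟨α, w, rfl, fun j hj => hα j (h hj)⟩

lemma wordSpan_headAvoiding_univ [Fintype κ] :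
    wordSpan R (headAvoiding (Finset.univ : Finset κ)) = ⊥ := by
  refine eq_bot_iff.2 (wordSpan_le.2 ?_)
  rintro _ ⟨α, w, rfl, hα⟩
  exact absurd (Finsupp.ext fun j => hα j (Finset.mem_univ j)) α.2

lemma excessAtLeast_subset_headAvoiding_empty (p e : ℕ) :
    excessAtLeast p (e + 1) ⊆ headAvoiding (∅ : Finset κ) := by
  rintro (_ | ⟨α, w⟩) ⟨_, hw⟩
  · simp at hw
  · exact ⟨α, w, rfl, by simp⟩

lemma letter_single_mul_mem_excessAtLeast (i : κ) {p e : ℕ} {t : Cobar R κ}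
    (ht : t ∈ wordSpan R (excessAtLeast p e)) :
    letter R (Finsupp.single i 1) * t ∈ wordSpan R (excessAtLeast (p + 1) e) := by
  refine mul_mem_wordSpan (S := {w | ∃ h, w = [⟨Finsupp.single i 1, h⟩]}) ?_
    (letter_mem_wordSpan fun h => ⟨h, rfl⟩) ht
  rintro _ ⟨h, rfl⟩ w ⟨hp, he⟩
  simp only [excessAtLeast, Set.mem_ofPred_eq, List.singleton_append, weight_cons, List.length_cons,
    Finsupp.degree_single]
  lia

/-- Multiplication of the first letter of every word by the variable `i`: a homotopy which the
filtration by `headAvoiding` makes contracting. -/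
def raise (i : κ) : Cobar R κ →ₗ[R] Cobar R κ :=
  mapHead fun α => letter R (α.1 + Finsupp.single i 1)

lemma raise_letter_mul (i : κ) {α : κ →₀ ℕ} (hα : α ≠ 0) (t : Cobar R κ) :
    raise i (letter R α * t) = letter R (α + Finsupp.single i 1) * t := by
  rw [letter_of_ne_zero R hα, raise, mapHead_ι_mul]

lemma raise_mem_excessAtLeast (i : κ) {p e : ℕ} {t : Cobar R κ}
    (ht : t ∈ wordSpan R (excessAtLeast p (e + 1))) :
    raise i t ∈ wordSpan R (excessAtLeast (p + 2) (e + 2)) := by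
  refine map_mem_of_mem_wordSpan ?_ ht
  rintro (_ | ⟨α, w⟩) ⟨hp, he⟩
  · simp at he
  · have hα : α.1 + Finsupp.single i 1 ≠ 0 := by simp [α.2]
    rw [word_cons_letter, raise_letter_mul i α.2, letter_of_ne_zero R hα, ← word_cons]
    refine word_mem_wordSpan ?_
    simp only [excessAtLeast, Set.mem_ofPred_eq, weight_cons, List.length_cons, map_add,
      Finsupp.degree_single] at hp he ⊢
    lia

variable [DecidableEq κ]

/-- The operator removing a first letter equal to the variable `i`, and killing all words that do
not start with this letter. -/
def strip (i : κ) : Cobar R κ →ₗ[R] Cobar R κ :=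
  mapHead fun α => if α.1 = Finsupp.single i 1 then 1 else 0

lemma strip_letter_mul (i : κ) {α : κ →₀ ℕ} (hα : α ≠ Finsupp.single i 1) (t : Cobar R κ) :
    strip i (letter R α * t) = 0 := by
  rcases eq_or_ne α 0 with rfl | h0
  · simp
  · rw [letter_of_ne_zero R h0, strip, mapHead_ι_mul, if_neg hα, zero_mul]

lemma strip_letter_single_mul (i : κ) (t : Cobar R κ) :
    strip i (letter R (Finsupp.single i 1) * t) = t := by
  rw [letter_of_ne_zero R (Finsupp.single_ne_zero.2 one_ne_zero), strip, mapHead_ι_mul, if_pos rfl,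
    one_mul]

lemma strip_raise (i : κ) (t : Cobar R κ) : strip i (raise i t) = 0 := by
  have h : strip i ∘ₗ raise i = (0 : Cobar R κ →ₗ[R] Cobar R κ) := by
    refine linearMap_ext_word ?_
    rintro (_ | ⟨α, w⟩)
    · simp [raise]
    · rw [word_cons_letter, LinearMap.comp_apply, raise_letter_mul i α.2,
        strip_letter_mul i (by simp [α.2]), LinearMap.zero_apply]
  exact LinearMap.congr_fun h t

lemma strip_eq_zero {i : κ} {s : Finset κ} (hi : i ∈ s) {t : Cobar R κ}
    (ht : t ∈ wordSpan R (headAvoiding s)) : strip i t = 0 := by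
  refine eqOn_wordSpan (f' := 0) ?_ ht
  rintro _ ⟨α, w, rfl, hα⟩
  rw [word_cons_letter, strip_letter_mul, LinearMap.zero_apply]
  intro h
  simpa [h] using hα i hi

lemma cobarD_mem_excessAtLeast {p e : ℕ} {t : Cobar R κ}
    (ht : t ∈ wordSpan R (excessAtLeast (p + 1) (e + 1))) :
    cobarD R t ∈ wordSpan R (excessAtLeast p e) := by
  refine cobarD_mem_wordSpan (fun w hw u hweight hlength => ?_) ht
  simp only [excessAtLeast, Set.mem_ofPred_eq, hweight, hlength] at hw ⊢
  lia

lemma cobarD_mem_headAvoiding {s : Finset κ} {t : Cobar R κ}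
    (ht : t ∈ wordSpan R (headAvoiding s)) : cobarD R t ∈ wordSpan R (headAvoiding s) := by
  refine map_mem_of_mem_wordSpan ?_ ht
  rintro _ ⟨α, w, rfl, hα⟩
  rw [word_cons_letter, cobarD_letter_mul, reducedCoproduct, Finset.sum_mul]
  refine Submodule.sub_mem _ (Submodule.sum_mem _ fun p hp => ?_) (letter_mul_mem_headAvoiding hα _)
  rw [mul_assoc]
  refine letter_mul_mem_headAvoiding (fun j hj => ?_) _
  have hsum : p.1 j + p.2 j = α.1 j := DFunLike.congr_fun (mem_antidiagonal.1 hp) j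
  exact (add_eq_zero.1 (hsum.trans (hα j hj))).1

lemma sum_letter_add_single_mul (i : κ) (α : κ →₀ ℕ) (t : Cobar R κ) :
    ∑ p ∈ antidiagonal α, letter R (p.1 + Finsupp.single i 1) * letter R p.2 * t =
      raise i (reducedCoproduct R α * t) +
        letter R (Finsupp.single i 1) * (letter R α * t) := by
  have hmem : ((0 : κ →₀ ℕ), α) ∈ antidiagonal α := by simp
  rw [reducedCoproduct, Finset.sum_mul, map_sum, ← Finset.sum_erase_add _ _ hmem,
    ← Finset.sum_erase_add _ _ hmem]
  simp only [letter_zero, zero_mul, map_zero, add_zero, zero_add, mul_assoc]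
  congr 1
  refine Finset.sum_congr rfl fun p hp => ?_
  obtain ⟨hne, hp⟩ := Finset.mem_erase.1 hp
  have h0 : p.1 ≠ 0 := by
    intro h0
    refine hne (Prod.ext h0 ?_)
    simpa [h0] using mem_antidiagonal.1 hp
  rw [raise_letter_mul i h0]

lemma cobarD_raise_sub_mem (i : κ) {s : Finset κ} {b : Cobar R κ}
    (hb : b ∈ wordSpan R (headAvoiding s)) :
    cobarD R (raise i b) - raise i (cobarD R b) - letter R (Finsupp.single i 1) * b ∈
      wordSpan R (headAvoiding (insert i s)) := by
  refine map_mem_of_mem_wordSpan (f := cobarD R ∘ₗ raise i - raise i ∘ₗ cobarD R -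
    LinearMap.mulLeft R (letter R (Finsupp.single i 1))) ?_ hb
  rintro _ ⟨α, w, rfl, hα⟩
  have hrest : ∑ p ∈ antidiagonal (α.1 + Finsupp.single i 1) with ¬Finsupp.single i 1 ≤ p.1,
      letter R p.1 * letter R p.2 * word R w ∈ wordSpan R (headAvoiding (insert i s)) := by
    refine Submodule.sum_mem _ fun p hp => ?_
    rw [Finset.mem_filter, mem_antidiagonal, Finsupp.single_le_iff] at hp
    rw [mul_assoc]
    refine letter_mul_mem_headAvoiding (fun j hj => ?_) _
    have hj' : p.1 j + p.2 j = α.1 j + Finsupp.single i 1 j := DFunLike.congr_fun hp.1 j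
    rcases eq_or_ne j i with rfl | hji
    · lia
    · have := hα j (Finset.mem_of_mem_insert_of_ne hj hji)
      rw [Finsupp.single_eq_of_ne hji] at hj'
      lia
  convert hrest using 1
  simp only [LinearMap.sub_apply, LinearMap.comp_apply, LinearMap.mulLeft_apply]
  rw [word_cons_letter, raise_letter_mul i α.2, cobarD_letter_mul, cobarD_letter_mul, map_sub,
    raise_letter_mul i α.2, reducedCoproduct, Finset.sum_mul,
    sum_antidiagonal_add _ _ fun p => letter R p.1 * letter R p.2 * word R w,
    sum_letter_add_single_mul i α.1]
  abel

lemma exists_raise_decomposition (i : κ) {s : Finset κ} {p : ℕ} {a : Cobar R κ}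
    (ha : a ∈ wordSpan R (excessAtLeast (p + 1) 1 ∩ headAvoiding s)) :
    ∃ b ∈ wordSpan R (headAvoiding s), ∃ c ∈ wordSpan R (excessAtLeast p 1),
      ∃ a' ∈ wordSpan R (headAvoiding (insert i s)),
        a = raise i b + letter R (Finsupp.single i 1) * c + a' := by
  suffices h : wordSpan R (excessAtLeast (p + 1) 1 ∩ headAvoiding s) ≤
      (wordSpan R (headAvoiding s)).map (raise i) ⊔ (wordSpan R (excessAtLeast p 1)).map
        (LinearMap.mulLeft R (letter R (Finsupp.single i 1))) ⊔
        wordSpan R (headAvoiding (insert i s)) by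
    obtain ⟨x, hx, a', ha', rfl⟩ := Submodule.mem_sup.1 (h ha)
    obtain ⟨_, ⟨b, hb, rfl⟩, _, ⟨c, hc, rfl⟩, rfl⟩ := Submodule.mem_sup.1 hx
    exact ⟨b, hb, c, hc, a', ha', rfl⟩
  refine wordSpan_le.2 ?_
  rintro _ ⟨⟨hp, he⟩, α, w, rfl, hα⟩
  rw [word_cons_letter]
  by_cases hi : α.1 i = 0
  · refine Submodule.mem_sup_right (letter_mul_mem_headAvoiding (fun j hj => ?_) _)
    rcases Finset.mem_insert.1 hj with rfl | hj
    exacts [hi, hα j hj]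
  obtain ⟨β, hβ⟩ : ∃ β, α.1 = β + Finsupp.single i 1 :=
    le_iff_exists_add'.1 (Finsupp.single_le_iff.2 (Nat.one_le_iff_ne_zero.2 hi))
  refine Submodule.mem_sup_left ?_
  rcases eq_or_ne β 0 with rfl | hβ0
  · refine Submodule.mem_sup_right ⟨word R w, word_mem_wordSpan ?_, by simp [hβ]⟩
    simp only [weight_cons, hβ, List.length_cons, zero_add, Finsupp.degree_single] at hp he
    exact ⟨by lia, by lia⟩
  · refine Submodule.mem_sup_left ⟨letter R β * word R w, ?_, ?_⟩
    · refine letter_mul_mem_headAvoiding (fun j hj => ?_) _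
      have := hα j hj
      rw [hβ, Finsupp.add_apply] at this
      lia
    · rw [raise_letter_mul i hβ0, hβ]

lemma eq_cobarD_of_cobarD_mem_headAvoiding {i : κ} {s : Finset κ} {b c a' : Cobar R κ}
    (hb : b ∈ wordSpan R (headAvoiding s)) (ha' : a' ∈ wordSpan R (headAvoiding (insert i s)))
    (h : cobarD R (raise i b + letter R (Finsupp.single i 1) * c + a') ∈
      wordSpan R (headAvoiding (insert i s))) : b = cobarD R c := by
  have hmem := Submodule.sub_mem _ (Submodule.sub_mem _ h (cobarD_raise_sub_mem i hb))
    (cobarD_mem_headAvoiding ha')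
  have hrest : raise i (cobarD R b) + letter R (Finsupp.single i 1) * (b - cobarD R c) ∈
      wordSpan R (headAvoiding (insert i s)) := by
    convert hmem using 1
    rw [map_add, map_add, cobarD_letter_single_mul]
    noncomm_ring
  have hstrip := strip_eq_zero (Finset.mem_insert_self i s) hrest
  rw [map_add, strip_raise, strip_letter_single_mul, zero_add] at hstrip
  exact sub_eq_zero.1 hstrip

lemma exists_sub_cobarD_mem_insert (i : κ) {s : Finset κ} {p : ℕ}
    (ih : ∀ c ∈ wordSpan R (excessAtLeast (κ := κ) p 1),
      cobarD R c ∈ wordSpan R (headAvoiding s) →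
        ∃ f ∈ wordSpan R (excessAtLeast (p + 1) 2), c - cobarD R f ∈ wordSpan R (headAvoiding s))
    {a : Cobar R κ} (ha : a ∈ wordSpan R (excessAtLeast (p + 1) 1 ∩ headAvoiding s))
    (hda : cobarD R a ∈ wordSpan R (headAvoiding (insert i s))) :
    ∃ f ∈ wordSpan R (excessAtLeast (p + 2) 2),
      a - cobarD R f ∈ wordSpan R (headAvoiding (insert i s)) := by
  obtain ⟨b, hb, c, hc, a', ha', rfl⟩ := exists_raise_decomposition i ha
  obtain rfl := eq_cobarD_of_cobarD_mem_headAvoiding hb ha' hda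
  obtain ⟨f, hf, hcf⟩ := ih c hc hb
  have hcf' : c - cobarD R f ∈ wordSpan R (excessAtLeast p 1) :=
    Submodule.sub_mem _ hc (cobarD_mem_excessAtLeast hf)
  refine ⟨raise i (c - cobarD R f) - letter R (Finsupp.single i 1) * f,
    Submodule.sub_mem _ (raise_mem_excessAtLeast i hcf') (letter_single_mul_mem_excessAtLeast i hf),
    ?_⟩
  convert Submodule.sub_mem _ ha' (cobarD_raise_sub_mem i hcf) using 1
  simp only [map_sub, cobarD_letter_single_mul, cobarD_cobarD, sub_zero, mul_sub]
  abel

theorem exists_sub_cobarD_mem_headAvoiding (p : ℕ) (s : Finset κ) :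
    ∀ c ∈ wordSpan R (excessAtLeast (κ := κ) p 1), cobarD R c ∈ wordSpan R (headAvoiding s) →
      ∃ f ∈ wordSpan R (excessAtLeast (p + 1) 2),
        c - cobarD R f ∈ wordSpan R (headAvoiding s) := by
  induction p generalizing s with
  | zero =>
    have hempty : excessAtLeast (κ := κ) 0 1 = ∅ := by
      refine Set.eq_empty_of_forall_notMem fun w hw => ?_
      have := hw.1
      have := hw.2
      lia
    intro c hc _
    obtain rfl : c = 0 := by simpa [hempty, wordSpan] using hc
    exact ⟨0, Submodule.zero_mem _, by simp⟩
  | succ p ihp =>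
    induction s using Finset.induction_on with
    | empty =>
      intro c hc _
      refine ⟨0, Submodule.zero_mem _, ?_⟩
      rw [map_zero, sub_zero]
      exact wordSpan_mono (excessAtLeast_subset_headAvoiding_empty _ _) hc
    | insert i s _ ihs =>
      intro c hc hdc
      obtain ⟨f, hf, hcf⟩ :=
        ihs c hc (wordSpan_mono (headAvoiding_anti (Finset.subset_insert i s)) hdc)
      have hcf' : c - cobarD R f ∈ wordSpan R (excessAtLeast (p + 1) 1) :=
        Submodule.sub_mem _ hc (cobarD_mem_excessAtLeast hf)
      obtain ⟨f', hf', h⟩ := exists_sub_cobarD_mem_insert i (ihp s) (mem_wordSpan_inter hcf' hcf)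
        (by simpa using hdc)
      exact ⟨f + f', Submodule.add_mem _ hf hf', by rwa [map_add, ← sub_sub]⟩

theorem exists_cobarD_eq [Finite κ] {p : ℕ} {t : Cobar R κ}
    (ht : t ∈ wordSpan R (excessAtLeast p 1)) (hd : cobarD R t = 0) :
    ∃ f ∈ wordSpan R (excessAtLeast (p + 1) 2), cobarD R f = t := by
  cases nonempty_fintype κ
  obtain ⟨f, hf, h⟩ := exists_sub_cobarD_mem_headAvoiding p Finset.univ t ht
    (hd ▸ Submodule.zero_mem _)
  rw [wordSpan_headAvoiding_univ, Submodule.mem_bot] at h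
  exact ⟨f, hf, (sub_eq_zero.1 h).symm⟩

end Acyclicity

section GradedCommutator

variable {K A : Type*} [Field K] [Ring A] [Algebra K A] (𝒜 : ℤ → Submodule K A) [GradedAlgebra 𝒜]

/-- The projection of a `ℤ`-graded algebra onto the sum of its odd homogeneous components. -/
def oddPart : A →ₗ[K] A :=
  DirectSum.toModule K ℤ A (fun i => if Odd i then (𝒜 i).subtype else 0) ∘ₗ
    (DirectSum.decomposeLinearEquiv 𝒜).toLinearMap

variable {𝒜} {i j : ℤ} {a b : A}

lemma oddPart_of_mem (ha : a ∈ 𝒜 i) : oddPart 𝒜 a = if Odd i then a else 0 := by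
  rw [oddPart, LinearMap.comp_apply, LinearEquiv.coe_coe, DirectSum.decomposeLinearEquiv_apply,
    DirectSum.decompose_of_mem 𝒜 ha, ← DirectSum.lof_eq_of K, DirectSum.toModule_lof]
  split_ifs <;> rfl

variable (𝒜) in
/-- The graded commutator `ab - (-1)^{ij} ba` of elements of degrees `i` and `j`, extended
bilinearly: the correction by odd parts changes the sign exactly when both degrees are odd. -/
def gradedCommutator : A →ₗ[K] A →ₗ[K] A :=
  LinearMap.mul K A - (LinearMap.mul K A).flip +
    (2 : K) • ((LinearMap.mul K A).flip.compl₁₂ (oddPart 𝒜) (oddPart 𝒜))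

lemma gradedCommutator_of_mem (ha : a ∈ 𝒜 i) (hb : b ∈ 𝒜 j) :
    gradedCommutator 𝒜 a b = a * b - (-1 : K) ^ (i * j) • (b * a) := by
  have h : gradedCommutator 𝒜 a b = a * b - b * a + (2 : K) • (oddPart 𝒜 b * oddPart 𝒜 a) := rfl
  rw [h, oddPart_of_mem ha, oddPart_of_mem hb]
  by_cases hi : Even i <;> by_cases hj : Even j <;>
    simp only [neg_one_zpow_eq_ite, Int.even_mul, ← Int.not_even_iff_odd, hi, hj, not_true_eq_false,
      not_false_eq_true, if_true, if_false, or_true, true_or, or_self, mul_zero, zero_mul] <;>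
    module

lemma gradedCommutator_mem (ha : a ∈ 𝒜 i) (hb : b ∈ 𝒜 j) : gradedCommutator 𝒜 a b ∈ 𝒜 (i + j) := by
  rw [gradedCommutator_of_mem ha hb]
  refine Submodule.sub_mem _ (SetLike.mul_mem_graded ha hb) (Submodule.smul_mem _ _ ?_)
  rw [add_comm]
  exact SetLike.mul_mem_graded hb ha

lemma linearMap_ext_homogeneous {M : Type*} [AddCommGroup M] [Module K M] {f f' : A →ₗ[K] M}
    (h : ∀ i, ∀ a ∈ 𝒜 i, f a = f' a) : f = f' :=
  DirectSum.decompose_lhom_ext 𝒜 fun i => LinearMap.ext fun a => h i a a.2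

lemma gradedCommutator_antisymm (ha : a ∈ 𝒜 i) (hb : b ∈ 𝒜 j) :
    gradedCommutator 𝒜 a b = -(-1 : K) ^ (i * j) • gradedCommutator 𝒜 b a := by
  rw [gradedCommutator_of_mem ha hb, gradedCommutator_of_mem hb ha, mul_comm j i]
  rcases (Int.even_or_odd (i * j)) with h | h <;> rw [h.neg_one_zpow] <;> module

lemma gradedCommutator_jacobi (ha : a ∈ 𝒜 i) (hb : b ∈ 𝒜 j) (c : A) :
    gradedCommutator 𝒜 a (gradedCommutator 𝒜 b c) =
      gradedCommutator 𝒜 (gradedCommutator 𝒜 a b) c +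
        (-1 : K) ^ (i * j) • gradedCommutator 𝒜 b (gradedCommutator 𝒜 a c) := by
  suffices h : gradedCommutator 𝒜 a ∘ₗ gradedCommutator 𝒜 b =
      gradedCommutator 𝒜 (gradedCommutator 𝒜 a b) +
        (-1 : K) ^ (i * j) • (gradedCommutator 𝒜 b ∘ₗ gradedCommutator 𝒜 a) from
    LinearMap.congr_fun h c
  refine linearMap_ext_homogeneous (𝒜 := 𝒜) fun k c hc => ?_
  simp only [LinearMap.comp_apply, LinearMap.add_apply, LinearMap.smul_apply]
  rw [gradedCommutator_of_mem ha (gradedCommutator_mem hb hc),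
    gradedCommutator_of_mem (gradedCommutator_mem ha hb) hc,
    gradedCommutator_of_mem hb (gradedCommutator_mem ha hc),
    gradedCommutator_of_mem ha hb, gradedCommutator_of_mem hb hc, gradedCommutator_of_mem ha hc,
    mul_add i, add_mul i, mul_add j, mul_comm j i]
  simp only [zpow_add₀ (neg_ne_zero.2 one_ne_zero : (-1 : K) ≠ 0), mul_sub, sub_mul, smul_sub,
    mul_smul_comm, smul_mul_assoc, mul_assoc]
  rcases Int.even_or_odd (i * j) with h | h <;> rcases Int.even_or_odd (i * k) with h' | h' <;>
    rcases Int.even_or_odd (j * k) with h'' | h'' <;>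
    rw [h.neg_one_zpow, h'.neg_one_zpow, h''.neg_one_zpow] <;> module

lemma gradedCommutator_leibniz {d : A →ₗ[K] A} (hd : ∀ i, ∀ a ∈ 𝒜 i, d a ∈ 𝒜 (i + 1))
    (hmul : ∀ i, ∀ a ∈ 𝒜 i, ∀ b, d (a * b) = d a * b + (-1 : K) ^ i • (a * d b))
    (ha : a ∈ 𝒜 i) (b : A) :
    d (gradedCommutator 𝒜 a b) =
      gradedCommutator 𝒜 (d a) b + (-1 : K) ^ i • gradedCommutator 𝒜 a (d b) := by
  suffices h : d ∘ₗ gradedCommutator 𝒜 a =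
      gradedCommutator 𝒜 (d a) + (-1 : K) ^ i • (gradedCommutator 𝒜 a ∘ₗ d) from
    LinearMap.congr_fun h b
  refine linearMap_ext_homogeneous (𝒜 := 𝒜) fun j b hb => ?_
  simp only [LinearMap.comp_apply, LinearMap.add_apply, LinearMap.smul_apply]
  rw [gradedCommutator_of_mem ha hb, gradedCommutator_of_mem (hd i a ha) hb,
    gradedCommutator_of_mem ha (hd j b hb), map_sub, map_smul, hmul i a ha, hmul j b hb,
    add_mul i, mul_add i, one_mul, mul_one]
  simp only [zpow_add₀ (neg_ne_zero.2 one_ne_zero : (-1 : K) ≠ 0)]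
  rcases Int.even_or_odd (i * j) with h | h <;> rcases Int.even_or_odd i with h' | h' <;>
    rcases Int.even_or_odd j with h'' | h'' <;>
    rw [h.neg_one_zpow, h'.neg_one_zpow, h''.neg_one_zpow] <;> module

/-- The differential graded Lie algebra underlying a differential graded associative algebra. -/
def commutatorDGLA {A : Type} [Ring A] [Algebra ℝ A] (𝒜 : ℤ → Submodule ℝ A) [GradedAlgebra 𝒜]
    (d : A →ₗ[ℝ] A) (hd : ∀ i, ∀ a ∈ 𝒜 i, d a ∈ 𝒜 (i + 1)) (hd_sq : ∀ a, d (d a) = 0)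
    (hmul : ∀ i, ∀ a ∈ 𝒜 i, ∀ b, d (a * b) = d a * b + (-1 : ℝ) ^ i • (a * d b)) : DGLA where
  carrier := A
  grade := 𝒜
  isInternal := DirectSum.Decomposition.isInternal 𝒜
  bracket := gradedCommutator 𝒜
  d := d
  bracket_grade _ _ _ ha _ hb := gradedCommutator_mem ha hb
  d_grade := hd
  d_sq := hd_sq
  antisymm _ _ _ ha _ hb := gradedCommutator_antisymm ha hb
  jacobi _ _ _ ha _ hb := gradedCommutator_jacobi ha hb
  leibniz _ _ ha := gradedCommutator_leibniz hd hmul ha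

end GradedCommutator

section CobarGrading

variable {κ : Type}

/-- The cohomological degree of a word: the monomial `x^α` has degree `1 - 2|α|`. -/
def cobarDegree (w : List (Letter κ)) : ℤ := w.length - 2 * weight w

/-- The grading of the cobar construction by cohomological degree. -/
def cobarGrade (κ : Type) (n : ℤ) : Submodule ℝ (Cobar ℝ κ) :=
  wordSpan ℝ {w | cobarDegree w = n}

instance : GradedAlgebra (cobarGrade κ) where
  one_mem := by
    rw [← word_nil ℝ]
    exact word_mem_wordSpan (by simp [cobarDegree])
  mul_mem i j a b ha hb := by
    refine mul_mem_wordSpan ?_ ha hb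
    rintro v rfl w rfl
    simp only [Set.mem_ofPred_eq, cobarDegree, List.length_append, weight_append, Nat.cast_add]
    ring
  toDecomposition := (isInternal_wordSpan_fiber cobarDegree).chooseDecomposition

lemma letter_mem_cobarGrade (α : κ →₀ ℕ) : letter ℝ α ∈ cobarGrade κ (1 - 2 * α.degree) :=
  letter_mem_wordSpan fun _ => by simp [cobarDegree]

lemma odd_one_sub_two_mul_mul (i j : ℤ) : Odd ((1 - 2 * i) * (1 - 2 * j)) :=
  (odd_one.sub_even (even_two_mul i)).mul (odd_one.sub_even (even_two_mul j))

lemma gradedCommutator_letter (α β : κ →₀ ℕ) :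
    gradedCommutator (cobarGrade κ) (letter ℝ α) (letter ℝ β) =
      letter ℝ α * letter ℝ β + letter ℝ β * letter ℝ α := by
  rw [gradedCommutator_of_mem (letter_mem_cobarGrade α) (letter_mem_cobarGrade β),
    (odd_one_sub_two_mul_mul _ _).neg_one_zpow, neg_one_smul, sub_neg_eq_add]

variable [DecidableEq κ]

lemma cobarD_mem_cobarGrade {n : ℤ} {t : Cobar ℝ κ} (ht : t ∈ cobarGrade κ n) :
    cobarD ℝ t ∈ cobarGrade κ (n + 1) := by
  refine cobarD_mem_wordSpan (fun w hw u hu hlen => ?_) ht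
  simp only [Set.mem_ofPred_eq, cobarDegree] at hw ⊢
  rw [hu, hlen, ← hw]
  push_cast
  ring

lemma cobarD_mul {n : ℤ} {t : Cobar ℝ κ} (ht : t ∈ cobarGrade κ n) (u : Cobar ℝ κ) :
    cobarD ℝ (t * u) = cobarD ℝ t * u + (-1 : ℝ) ^ n • (t * cobarD ℝ u) := by
  have h (w : List (Letter κ)) (hw : cobarDegree w = n) :
      (cobarD ℝ ∘ₗ LinearMap.mulRight ℝ u) (word ℝ w) =
        (LinearMap.mulRight ℝ u ∘ₗ cobarD ℝ +
          (-1 : ℝ) ^ n • LinearMap.mulRight ℝ (cobarD ℝ u)) (word ℝ w) := by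
    have hsign : (-1 : ℝ) ^ n = (-1 : ℝ) ^ w.length := by
      rw [← hw, cobarDegree, zpow_sub₀ (by norm_num), (even_two_mul _).neg_one_zpow, div_one,
        zpow_natCast]
    simp only [LinearMap.comp_apply, LinearMap.mulRight_apply, LinearMap.add_apply,
      LinearMap.smul_apply, hsign, cobarD, oddDerivation_word_mul]
    rcases w.length.even_or_odd with h | h <;> simp [h.neg_one_pow]
  exact eqOn_wordSpan h ht

lemma exists_eq_add_cobarD [Finite κ] {n : ℤ} {t : Cobar ℝ κ} (ht : t ∈ cobarGrade κ n)
    (hd : cobarD ℝ t = 0) :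
    ∃ t₀ ∈ wordSpan ℝ {w : List (Letter κ) | cobarDegree w = n ∧ w.length = weight w},
      ∃ f ∈ cobarGrade κ (n - 1), t = t₀ + cobarD ℝ f := by
  rcases lt_or_ge 0 n with hn | hn
  · refine ⟨t, wordSpan_mono (fun w (hw : cobarDegree w = n) => ?_) ht, 0, Submodule.zero_mem _,
      by simp⟩
    have := length_le_weight w
    rw [cobarDegree] at hw
    lia
  obtain ⟨p, rfl⟩ := Int.exists_eq_neg_ofNat hn
  have hsplit : {w : List (Letter κ) | cobarDegree w = -p} ⊆
      {w | cobarDegree w = -p ∧ w.length = weight w} ∪ excessAtLeast p 1 := by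
    intro w (hw : cobarDegree w = -p)
    have := length_le_weight w
    simp only [Set.mem_union, Set.mem_ofPred_eq, excessAtLeast, cobarDegree] at hw ⊢
    lia
  obtain ⟨t₀, ht₀, t₁, ht₁, rfl⟩ : ∃ t₀ ∈ _, ∃ t₁ ∈ _, t₀ + t₁ = t :=
    Submodule.mem_sup.1 (wordSpan_union (R := ℝ) _ _ ▸ wordSpan_mono hsplit ht)
  have hd₀ : cobarD ℝ t₀ = 0 := by
    have h : cobarD ℝ t₀ ∈ wordSpan ℝ (∅ : Set (List (Letter κ))) :=
      cobarD_mem_wordSpan (fun w hw u hu hlen => by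
        have := length_le_weight u
        have := hw.2
        lia) ht₀
    simpa [wordSpan] using h
  obtain ⟨f, hf, rfl⟩ := exists_cobarD_eq ht₁ (by simpa [hd₀] using hd)
  refine ⟨t₀, ht₀, f, wordSpan_mono (fun w hw => ?_) hf, rfl⟩
  have := hw.1
  rw [Set.mem_ofPred_eq, cobarDegree]
  lia

variable (κ) in
/-- The cobar construction of the symmetric coalgebra as a differential graded Lie algebra. -/
def cobarDGLA : DGLA :=
  commutatorDGLA (cobarGrade κ) (cobarD ℝ) (fun _ _ => cobarD_mem_cobarGrade) cobarD_cobarD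
    fun _ _ => cobarD_mul

end CobarGrading

section MultiIndex

variable {κ : Type*}

lemma exists_eq_single_add {α : κ →₀ ℕ} (h : α ≠ 0) : ∃ i β, α = Finsupp.single i 1 + β := by
  obtain ⟨i, hi⟩ := Finsupp.ne_iff.1 h
  obtain ⟨β, hβ⟩ := le_iff_exists_add.1 (Finsupp.single_le_iff.2 (Nat.one_le_iff_ne_zero.2 hi))
  exact ⟨i, β, hβ⟩

lemma exists_eq_single_of_degree_eq_one {α : κ →₀ ℕ} (h : α.degree = 1) :
    ∃ i, α = Finsupp.single i 1 := by
  obtain ⟨i, β, rfl⟩ := exists_eq_single_add (α := α) (by rintro rfl; simp at h)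
  rw [map_add, Finsupp.degree_single, Nat.add_eq_left, Finsupp.degree_eq_zero_iff] at h
  exact ⟨i, by rw [h, add_zero]⟩

lemma eq_single_of_add_eq_single_add_single {i j : κ} {β γ : κ →₀ ℕ}
    (h : β + γ = Finsupp.single i 1 + Finsupp.single j 1) (hβ : β ≠ 0) (hγ : γ ≠ 0) :
    β = Finsupp.single i 1 ∧ γ = Finsupp.single j 1 ∨
      β = Finsupp.single j 1 ∧ γ = Finsupp.single i 1 := by
  have hdeg : β.degree + γ.degree = 2 := by
    rw [← map_add, h, map_add, Finsupp.degree_single, Finsupp.degree_single]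
  rw [ne_eq, ← Finsupp.degree_eq_zero_iff] at hβ hγ
  obtain ⟨k, rfl⟩ := exists_eq_single_of_degree_eq_one (α := β) (by lia)
  obtain ⟨l, rfl⟩ := exists_eq_single_of_degree_eq_one (α := γ) (by lia)
  obtain ⟨rfl, rfl⟩ | ⟨-, rfl, rfl⟩ | ⟨h, -, -⟩ :=
    (Finsupp.single_add_single_eq_single_add_single one_ne_zero one_ne_zero).1 h
  · exact Or.inl ⟨rfl, rfl⟩
  · exact Or.inr ⟨rfl, rfl⟩
  · simp at h

lemma sum_antidiagonal_add_swap [DecidableEq κ] (R : Type*) {M : Type*} [Semiring R]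
    [AddCommMonoid M] [Module R M] (α : κ →₀ ℕ) (F : (κ →₀ ℕ) → (κ →₀ ℕ) → M) :
    ∑ p ∈ antidiagonal α, (F p.1 p.2 + F p.2 p.1) = (2 : R) • ∑ p ∈ antidiagonal α, F p.1 p.2 := by
  rw [Finset.sum_add_distrib, ← Finsupp.sum_antidiagonal_swap α F, two_smul]

variable {n : ℕ}

/-- The exponent of the monomial `x_{f 0} ⋯ x_{f (n - 1)}`. -/
def multiIndex (f : Fin n → κ) : κ →₀ ℕ := ∑ j, Finsupp.single (f j) 1

@[simp] lemma degree_multiIndex (f : Fin n → κ) : (multiIndex f).degree = n := by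
  simp [multiIndex]

lemma multiIndex_apply [DecidableEq κ] (f : Fin n → κ) (i : κ) :
    multiIndex f i = Fintype.card {j // f j = i} := by
  simp [multiIndex, Finsupp.finsetSum_apply, Finsupp.single_apply, Fintype.card_subtype]

lemma exists_perm_of_multiIndex_eq {f f' : Fin n → κ} (h : multiIndex f = multiIndex f') :
    ∃ σ : Equiv.Perm (Fin n), f' ∘ σ = f := by
  let := Classical.decEq κ
  have hcard (i : κ) : Fintype.card {j // f j = i} = Fintype.card {j // f' j = i} := by
    rw [← multiIndex_apply, h, multiIndex_apply]
  exact ⟨Equiv.ofFiberEquiv fun i => Fintype.equivOfCardEq (hcard i),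
    funext fun j => Equiv.ofFiberEquiv_map _ j⟩

lemma exists_multiIndex_eq {α : κ →₀ ℕ} (h : α.degree = n) : ∃ f : Fin n → κ, multiIndex f = α := by
  induction n generalizing α with
  | zero => exact ⟨Fin.elim0, by simp_all [multiIndex, Finsupp.degree_eq_zero_iff]⟩
  | succ n ih =>
    obtain ⟨i, β, rfl⟩ := exists_eq_single_add (α := α) (by rintro rfl; simp at h)
    rw [map_add, Finsupp.degree_single, add_comm, Nat.add_right_cancel_iff] at h
    obtain ⟨f, rfl⟩ := ih h
    exact ⟨Fin.cons i f, by simp [multiIndex, Fin.sum_univ_succ]⟩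

variable [Fintype κ]

lemma prod_pow_multiIndex {R : Type*} [CommSemiring R] (c : κ → R) (f : Fin n → κ) :
    ∏ i, c i ^ multiIndex f i = ∏ j, c (f j) := by
  classical
  simp only [multiIndex_apply, Fintype.card_subtype]
  rw [← Finset.prod_fiberwise' Finset.univ f c]
  simp

lemma mem_finsuppAntidiag_univ [DecidableEq κ] {α : κ →₀ ℕ} :
    α ∈ Finset.univ.finsuppAntidiag n ↔ α.degree = n := by
  simp [Finset.mem_finsuppAntidiag, Finsupp.degree_eq_sum]

lemma sum_antidiagonal_finsuppAntidiag [DecidableEq κ] {M : Type*} [AddCommMonoid M] (n : ℕ)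
    (F : (κ →₀ ℕ) → (κ →₀ ℕ) → M) :
    ∑ p ∈ antidiagonal n, ∑ β ∈ Finset.univ.finsuppAntidiag p.1,
      ∑ γ ∈ Finset.univ.finsuppAntidiag p.2, F β γ =
    ∑ α ∈ Finset.univ.finsuppAntidiag n, ∑ p ∈ antidiagonal α, F p.1 p.2 := by
  simp only [← Finset.sum_product']
  rw [Finset.sum_sigma', Finset.sum_sigma']
  refine Finset.sum_nbij' (fun x => ⟨x.2.1 + x.2.2, x.2⟩)
    (fun x => ⟨(x.2.1.degree, x.2.2.degree), x.2⟩) ?_ ?_ ?_ ?_ ?_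
  · rintro ⟨⟨p, q⟩, β, γ⟩ h
    simp only [Finset.mem_sigma, Finset.mem_product, mem_finsuppAntidiag_univ, mem_antidiagonal,
      map_add, and_true] at h ⊢
    rw [h.2.1, h.2.2, h.1]
  · rintro ⟨α, β, γ⟩ h
    simp only [Finset.mem_sigma, Finset.mem_product, mem_finsuppAntidiag_univ, mem_antidiagonal,
      and_true] at h ⊢
    rw [← map_add, h.2, h.1]
  · rintro ⟨⟨p, q⟩, β, γ⟩ h
    simp only [Finset.mem_sigma, Finset.mem_product, mem_finsuppAntidiag_univ] at h
    rw [h.2.1, h.2.2]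
  · rintro ⟨α, β, γ⟩ h
    simp only [Finset.mem_sigma, mem_antidiagonal] at h
    rw [h.2]
  · exact fun _ _ => rfl

lemma eq_of_sum_pow_smul_eq {K M : Type*} [Field K] [Infinite K] [AddCommGroup M] [Module K M]
    {s : Finset (κ →₀ ℕ)} {u v : (κ →₀ ℕ) → M}
    (h : ∀ c : κ → K, ∑ α ∈ s, (∏ i, c i ^ α i) • u α = ∑ α ∈ s, (∏ i, c i ^ α i) • v α)
    {α : κ →₀ ℕ} (hα : α ∈ s) : u α = v α := by
  refine sub_eq_zero.1 ((Module.forall_dual_apply_eq_zero_iff K _).1 fun φ => ?_)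
  have hpoly : ∑ β ∈ s, MvPolynomial.monomial β (φ (u β - v β)) = 0 := by
    refine MvPolynomial.funext fun c => ?_
    have hc := congrArg φ (sub_eq_zero.2 (h c))
    simpa [MvPolynomial.eval_monomial, Finsupp.prod_fintype, ← Finset.sum_sub_distrib, mul_sub,
      mul_comm] using hc
  classical
  simpa [MvPolynomial.coeff_sum, MvPolynomial.coeff_monomial, hα] using
    congrArg (MvPolynomial.coeff α) hpoly

end MultiIndex

section Augmentation

variable {R : Type*} [CommRing R]

lemma algebraMapInv_eq_zero {X : Type*} {t : FreeAlgebra R X} (ht : t ∈ wordSpan R {w | w ≠ []}) :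
    FreeAlgebra.algebraMapInv t = 0 := by
  have h (w : List X) (hw : w ≠ []) : FreeAlgebra.algebraMapInv (word R w) = 0 := by
    obtain ⟨x, w, rfl⟩ := List.exists_cons_of_ne_nil hw
    rw [word_cons, map_mul, FreeAlgebra.algebraMapInv, FreeAlgebra.lift_ι_apply, Pi.zero_apply,
      zero_mul]
  exact eqOn_wordSpan (f := FreeAlgebra.algebraMapInv.toLinearMap) (f' := 0) h ht

@[simp] lemma algebraMapInv_letter {κ : Type*} (α : κ →₀ ℕ) :
    FreeAlgebra.algebraMapInv (letter R α) = 0 :=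
  algebraMapInv_eq_zero (letter_mem_wordSpan fun _ => by simp)

@[simp] lemma algebraMapInv_cobarD {κ : Type*} [DecidableEq κ] (t : Cobar R κ) :
    FreeAlgebra.algebraMapInv (cobarD R t) = 0 :=
  algebraMapInv_eq_zero (cobarD_mem_wordSpan (S := Set.univ)
    (fun w _ u _ hu => List.ne_nil_of_length_pos (by lia)) (by simp))

end Augmentation

lemma linearIndependent_letter_single {R : Type*} [CommRing R] {κ : Type*} :
    LinearIndependent R fun i : κ => letter R (Finsupp.single i 1) := by
  have hinj : Function.Injective fun i : κ =>
      ([⟨Finsupp.single i 1, by simp⟩] : List (Letter κ)) := fun i j h => by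
    simpa [Finsupp.single_left_inj] using h
  simpa [Function.comp_def, letter_of_ne_zero] using
    (wordBasis R (Letter κ)).linearIndependent.comp _ hinj

/-- A free Lie algebra presentation in coordinates: the generators are indexed by the monomials
`x^α` in the variables `κ`, and freeness is retained only as the existence of the comparison map to
the cobar construction. -/
structure MonomialPresentation (κ : Type) [DecidableEq κ] (D : DGLA) where
  gen : (κ →₀ ℕ) → D.carrier
  gen_zero : gen 0 = 0
  gen_mem_grade (α : κ →₀ ℕ) : gen α ∈ D.grade (1 - 2 * α.degree)
  d_gen (α : κ →₀ ℕ) :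
    D.d (gen α) = (1 / 2 : ℝ) • ∑ p ∈ antidiagonal α, D.bracket (gen p.1) (gen p.2)
  lieSpan_gen : D.lieSpan (Set.range gen) = ⊤
  toCobar : D.carrier →ₗ[ℝ] Cobar ℝ κ
  toCobar_bracket (a b : D.carrier) :
    toCobar (D.bracket a b) = gradedCommutator (cobarGrade κ) (toCobar a) (toCobar b)
  toCobar_mem_grade (n : ℤ) (a : D.carrier) (ha : a ∈ D.grade n) : toCobar a ∈ cobarGrade κ n
  toCobar_gen (α : κ →₀ ℕ) : toCobar (gen α) = letter ℝ α

namespace MonomialPresentation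

variable {κ : Type} [DecidableEq κ] {D : DGLA} (P : MonomialPresentation κ D)

lemma toCobar_d_gen (α : κ →₀ ℕ) : P.toCobar (D.d (P.gen α)) = reducedCoproduct ℝ α := by
  simp only [P.d_gen, map_smul, map_sum, P.toCobar_bracket, P.toCobar_gen, gradedCommutator_letter]
  rw [sum_antidiagonal_add_swap ℝ α fun β γ => letter ℝ β * letter ℝ γ, smul_smul,
    one_div_mul_cancel two_ne_zero, one_smul, reducedCoproduct]

lemma toCobar_d (a : D.carrier) : P.toCobar (D.d a) = cobarD ℝ (P.toCobar a) := by
  refine DGLA.map_d_of_lieSpan_eq_top (B := cobarDGLA κ) P.lieSpan_gen ?_ P.toCobar_bracket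
    P.toCobar_mem_grade ?_ a
  · rintro _ ⟨α, rfl⟩
    exact ⟨_, P.gen_mem_grade α⟩
  · rintro _ ⟨α, rfl⟩
    change P.toCobar (D.d (P.gen α)) = cobarD ℝ (P.toCobar (P.gen α))
    rw [toCobar_d_gen, P.toCobar_gen, cobarD_letter]

lemma bracket_gen_bracket_gen (α β : κ →₀ ℕ) (c : D.carrier) :
    D.bracket (D.bracket (P.gen α) (P.gen β)) c =
      D.bracket (P.gen α) (D.bracket (P.gen β) c) +
        D.bracket (P.gen β) (D.bracket (P.gen α) c) := by
  rw [D.jacobi _ _ _ (P.gen_mem_grade α) _ (P.gen_mem_grade β),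
    (odd_one_sub_two_mul_mul _ _).neg_one_zpow]
  module

lemma bracket_gen_comm (α β : κ →₀ ℕ) :
    D.bracket (P.gen α) (P.gen β) = D.bracket (P.gen β) (P.gen α) := by
  rw [D.antisymm _ _ _ (P.gen_mem_grade α) _ (P.gen_mem_grade β),
    (odd_one_sub_two_mul_mul _ _).neg_one_zpow]
  module

/-- The action of the free associative algebra on the Lie algebra extending the adjoint action of
the generators. -/
def adjoint : Cobar ℝ κ →ₐ[ℝ] Module.End ℝ D.carrier :=
  FreeAlgebra.lift ℝ fun α => D.bracket (P.gen α.1)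

@[simp] lemma adjoint_letter (α : κ →₀ ℕ) : P.adjoint (letter ℝ α) = D.bracket (P.gen α) := by
  rcases eq_or_ne α 0 with rfl | hα
  · simp [P.gen_zero]
  · rw [letter_of_ne_zero ℝ hα, adjoint, FreeAlgebra.lift_ι_apply]

lemma adjoint_reducedCoproduct (α : κ →₀ ℕ) :
    P.adjoint (reducedCoproduct ℝ α) = D.bracket (D.d (P.gen α)) := by
  ext c
  simp only [P.d_gen, map_smul, map_sum, LinearMap.smul_apply, LinearMap.sum_apply,
    bracket_gen_bracket_gen, reducedCoproduct, map_mul, adjoint_letter, Module.End.mul_apply]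
  rw [sum_antidiagonal_add_swap ℝ α fun β γ => D.bracket (P.gen β) (D.bracket (P.gen γ) c),
    smul_smul, one_div_mul_cancel two_ne_zero, one_smul]

/-- The values of `dynkin` on words; the second summand vanishes unless `w` is empty. -/
def dynkinWord : List (Letter κ) → D.carrier
  | [] => 0
  | α :: w => D.bracket (P.gen α.1) (dynkinWord w) +
      FreeAlgebra.algebraMapInv (word ℝ w) • (α.1.degree : ℝ) • P.gen α.1

/-- The weighted Dynkin operator `α₁ ⋯ αₙ ↦ |αₙ| • [α₁, [α₂, …, αₙ]]`. -/
def dynkin : Cobar ℝ κ →ₗ[ℝ] D.carrier :=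
  (wordBasis ℝ (Letter κ)).constr ℝ P.dynkinWord

lemma dynkin_word (w : List (Letter κ)) : P.dynkin (word ℝ w) = P.dynkinWord w := by
  rw [dynkin, ← wordBasis_apply, Module.Basis.constr_basis]

@[simp] lemma dynkin_one : P.dynkin 1 = 0 := by
  rw [← word_nil, dynkin_word, dynkinWord]

lemma dynkin_letter_mul (α : κ →₀ ℕ) (t : Cobar ℝ κ) :
    P.dynkin (letter ℝ α * t) = D.bracket (P.gen α) (P.dynkin t) +
      FreeAlgebra.algebraMapInv t • (α.degree : ℝ) • P.gen α := by
  rcases eq_or_ne α 0 with rfl | hα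
  · simp [P.gen_zero]
  suffices h : P.dynkin ∘ₗ LinearMap.mulLeft ℝ (letter ℝ α) = D.bracket (P.gen α) ∘ₗ P.dynkin +
      FreeAlgebra.algebraMapInv.toLinearMap.smulRight ((α.degree : ℝ) • P.gen α) from
    LinearMap.congr_fun h t
  refine linearMap_ext_word fun w => ?_
  have h := P.dynkin_word (⟨α, hα⟩ :: w)
  rw [word_cons_letter, dynkinWord, ← dynkin_word] at h
  exact h

@[simp] lemma dynkin_letter (α : κ →₀ ℕ) :
    P.dynkin (letter ℝ α) = (α.degree : ℝ) • P.gen α := by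
  simpa using P.dynkin_letter_mul α 1

lemma dynkin_mul (t u : Cobar ℝ κ) :
    P.dynkin (t * u) = P.adjoint t (P.dynkin u) + FreeAlgebra.algebraMapInv u • P.dynkin t := by
  suffices h : P.dynkin ∘ₗ LinearMap.mulRight ℝ u =
      P.adjoint.toLinearMap.flip (P.dynkin u) + FreeAlgebra.algebraMapInv u • P.dynkin from
    LinearMap.congr_fun h t
  refine linearMap_ext_word fun w => ?_
  simp only [LinearMap.comp_apply, LinearMap.mulRight_apply, LinearMap.add_apply,
    LinearMap.flip_apply, AlgHom.toLinearMap_apply, LinearMap.smul_apply]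
  induction w with
  | nil => simp
  | cons α w ih =>
    rw [word_cons_letter, mul_assoc, dynkin_letter_mul, ih, dynkin_letter_mul, map_mul, map_mul,
      adjoint_letter, Module.End.mul_apply, map_add, map_smul]
    module

lemma dynkin_reducedCoproduct (α : κ →₀ ℕ) :
    P.dynkin (reducedCoproduct ℝ α) = (α.degree : ℝ) • D.d (P.gen α) := by
  have h : P.dynkin (reducedCoproduct ℝ α) =
      ∑ p ∈ antidiagonal α, (p.2.degree : ℝ) • D.bracket (P.gen p.1) (P.gen p.2) := by
    simp only [reducedCoproduct, map_sum, dynkin_letter_mul, dynkin_letter, algebraMapInv_letter,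
      map_smul, zero_smul, add_zero]
  refine smul_right_injective D.carrier (two_ne_zero (α := ℝ)) ?_
  simp only
  rw [h, ← sum_antidiagonal_add_swap ℝ α fun β γ => (γ.degree : ℝ) • D.bracket (P.gen β) (P.gen γ),
    P.d_gen, smul_comm (α.degree : ℝ), smul_smul, mul_one_div_cancel two_ne_zero, one_smul,
    Finset.smul_sum]
  refine Finset.sum_congr rfl fun p hp => ?_
  rw [P.bracket_gen_comm p.2, ← add_smul, ← mem_antidiagonal.1 hp, map_add, Nat.cast_add, add_comm]

lemma dynkin_cobarD (t : Cobar ℝ κ) : P.dynkin (cobarD ℝ t) = D.d (P.dynkin t) := by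
  suffices h : P.dynkin ∘ₗ cobarD ℝ = D.d ∘ₗ P.dynkin from LinearMap.congr_fun h t
  refine linearMap_ext_word fun w => ?_
  simp only [LinearMap.comp_apply]
  induction w with
  | nil => simp
  | cons α w ih =>
    rw [word_cons_letter, cobarD_letter_mul, map_sub, dynkin_mul, adjoint_reducedCoproduct,
      dynkin_reducedCoproduct, dynkin_letter_mul, ih, algebraMapInv_cobarD, dynkin_letter_mul,
      map_add, map_smul, map_smul, D.leibniz _ _ (P.gen_mem_grade α.1),
      (odd_one.sub_even (even_two_mul _)).neg_one_zpow]
    module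

lemma dynkin_word_mem_grade (w : List (Letter κ)) :
    P.dynkin (word ℝ w) ∈ D.grade (cobarDegree w) := by
  induction w with
  | nil => simp
  | cons α w ih =>
    have hdeg : cobarDegree (α :: w) = 1 - 2 * α.1.degree + cobarDegree w := by
      simp only [cobarDegree, List.length_cons, weight_cons]
      push_cast
      ring
    rw [word_cons_letter, dynkin_letter_mul, hdeg]
    refine Submodule.add_mem _ (D.bracket_grade _ _ _ (P.gen_mem_grade α.1) _ ih) ?_
    rcases eq_or_ne w [] with rfl | hw
    · exact Submodule.smul_mem _ _ (Submodule.smul_mem _ _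
        (by simpa [cobarDegree] using P.gen_mem_grade α.1))
    · simp [algebraMapInv_eq_zero (word_mem_wordSpan hw)]

/-- The Dynkin operator divided by the weight, which retracts the cobar construction onto the Lie
algebra. -/
def retract : Cobar ℝ κ →ₗ[ℝ] D.carrier :=
  (wordBasis ℝ (Letter κ)).constr ℝ fun w => (weight w : ℝ)⁻¹ • P.dynkin (word ℝ w)

lemma retract_word (w : List (Letter κ)) :
    P.retract (word ℝ w) = (weight w : ℝ)⁻¹ • P.dynkin (word ℝ w) := by
  rw [retract, ← wordBasis_apply, Module.Basis.constr_basis, wordBasis_apply]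

lemma retract_of_weight_eq {N : ℕ} {t : Cobar ℝ κ} (ht : t ∈ wordSpan ℝ {w | weight w = N}) :
    P.retract t = (N : ℝ)⁻¹ • P.dynkin t := by
  have h (w : List (Letter κ)) (hw : weight w = N) :
      P.retract (word ℝ w) = ((N : ℝ)⁻¹ • P.dynkin) (word ℝ w) := by
    rw [retract_word, hw, LinearMap.smul_apply]
  exact eqOn_wordSpan h ht

lemma retract_mem_grade {n : ℤ} {t : Cobar ℝ κ} (ht : t ∈ cobarGrade κ n) :
    P.retract t ∈ D.grade n := by
  refine map_mem_of_mem_wordSpan (fun w (hw : cobarDegree w = n) => ?_) ht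
  rw [retract_word, ← hw]
  exact Submodule.smul_mem _ _ (P.dynkin_word_mem_grade w)

lemma retract_cobarD (t : Cobar ℝ κ) : P.retract (cobarD ℝ t) = D.d (P.retract t) := by
  suffices h : P.retract ∘ₗ cobarD ℝ = D.d ∘ₗ P.retract from LinearMap.congr_fun h t
  refine linearMap_ext_word fun w => ?_
  have hw : cobarD ℝ (word ℝ w) ∈ wordSpan ℝ {u | weight u = weight w} :=
    wordSpan_mono (fun u hu => hu.1) (cobarD_word_mem_wordSpan w)
  rw [LinearMap.comp_apply, LinearMap.comp_apply, retract_of_weight_eq P hw, dynkin_cobarD,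
    retract_word, map_smul]

/-- The Dynkin-Specht-Wever identities for an element of weight `N`. -/
structure IsDynkinEigenvector (N : ℕ) (a : D.carrier) : Prop where
  toCobar_mem : P.toCobar a ∈ wordSpan ℝ {w | weight w = N}
  adjoint_toCobar : P.adjoint (P.toCobar a) = D.bracket a
  dynkin_toCobar : P.dynkin (P.toCobar a) = (N : ℝ) • a

variable {P}

lemma isDynkinEigenvector_zero (N : ℕ) : P.IsDynkinEigenvector N 0 := by
  constructor <;> simp

lemma isDynkinEigenvector_gen (α : κ →₀ ℕ) : P.IsDynkinEigenvector α.degree (P.gen α) where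
  toCobar_mem := by
    rw [P.toCobar_gen]
    exact letter_mem_wordSpan fun _ => by simp
  adjoint_toCobar := by rw [P.toCobar_gen, adjoint_letter]
  dynkin_toCobar := by rw [P.toCobar_gen, dynkin_letter]

lemma IsDynkinEigenvector.algebraMapInv_toCobar {N : ℕ} {a : D.carrier}
    (h : P.IsDynkinEigenvector N a) (hN : N ≠ 0) : FreeAlgebra.algebraMapInv (P.toCobar a) = 0 := by
  refine algebraMapInv_eq_zero (wordSpan_mono ?_ h.toCobar_mem)
  rintro _ rfl rfl
  exact hN weight_nil

lemma IsDynkinEigenvector.bracket {i j : ℤ} {M N : ℕ} {a b : D.carrier} (hai : a ∈ D.grade i)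
    (hbj : b ∈ D.grade j) (ha : P.IsDynkinEigenvector M a) (hb : P.IsDynkinEigenvector N b)
    (hM : M ≠ 0) (hN : N ≠ 0) : P.IsDynkinEigenvector (M + N) (D.bracket a b) := by
  have hab : P.toCobar (D.bracket a b) =
      P.toCobar a * P.toCobar b - (-1 : ℝ) ^ (i * j) • (P.toCobar b * P.toCobar a) := by
    rw [P.toCobar_bracket, gradedCommutator_of_mem (P.toCobar_mem_grade i a hai)
      (P.toCobar_mem_grade j b hbj)]
  constructor
  · rw [hab]
    refine Submodule.sub_mem _ (mul_mem_wordSpan ?_ ha.toCobar_mem hb.toCobar_mem)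
      (Submodule.smul_mem _ _ (mul_mem_wordSpan ?_ hb.toCobar_mem ha.toCobar_mem)) <;>
    · rintro v rfl w rfl
      simp [add_comm]
  · ext c
    rw [hab, map_sub, map_smul, map_mul, map_mul, ha.adjoint_toCobar, hb.adjoint_toCobar]
    simp only [LinearMap.sub_apply, LinearMap.smul_apply, Module.End.mul_apply]
    rw [D.jacobi i j a hai b hbj, add_sub_cancel_right]
  · rw [hab, map_sub, map_smul, dynkin_mul, dynkin_mul, ha.adjoint_toCobar, hb.adjoint_toCobar,
      ha.dynkin_toCobar, hb.dynkin_toCobar, ha.algebraMapInv_toCobar hM,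
      hb.algebraMapInv_toCobar hN, map_smul, map_smul, D.antisymm i j a hai b hbj]
    push_cast
    module

variable (P)

lemma retract_toCobar (a : D.carrier) : P.retract (P.toCobar a) = a := by
  have hspan : Submodule.span ℝ
      {a | (∃ n, a ∈ D.grade n) ∧ ∃ N ≠ 0, P.IsDynkinEigenvector N a} = ⊤ := by
    refine DGLA.span_eq_top_of_bracket_mem P.lieSpan_gen ?_ ?_
    · rintro _ ⟨α, rfl⟩
      refine ⟨⟨_, P.gen_mem_grade α⟩, ?_⟩
      rcases eq_or_ne α 0 with rfl | hα
      · exact ⟨1, one_ne_zero, P.gen_zero ▸ isDynkinEigenvector_zero 1⟩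
      · exact ⟨α.degree, mt (Finsupp.degree_eq_zero_iff α).1 hα, isDynkinEigenvector_gen α⟩
    · rintro a ⟨⟨i, hai⟩, M, hM, ha⟩ b ⟨⟨j, hbj⟩, N, hN, hb⟩
      exact ⟨⟨i + j, D.bracket_grade i j a hai b hbj⟩, M + N, by lia, ha.bracket hai hbj hb hM hN⟩
  suffices h : P.retract ∘ₗ P.toCobar = LinearMap.id from LinearMap.congr_fun h a
  refine LinearMap.ext_on hspan ?_
  rintro a ⟨-, N, hN, ha⟩
  rw [LinearMap.comp_apply, retract_of_weight_eq P ha.toCobar_mem, ha.dynkin_toCobar, smul_smul,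
    inv_mul_cancel₀ (Nat.cast_ne_zero.2 hN), one_smul, LinearMap.id_apply]

lemma d_gen_single (i : κ) : D.d (P.gen (Finsupp.single i 1)) = 0 := by
  rw [← P.retract_toCobar (P.gen (Finsupp.single i 1)), ← retract_cobarD, P.toCobar_gen,
    cobarD_letter, reducedCoproduct_single, map_zero]

lemma gen_single_mem_closed (i : κ) : P.gen (Finsupp.single i 1) ∈ D.closed (-1) :=
  ⟨by simpa using P.gen_mem_grade (Finsupp.single i 1), P.d_gen_single i⟩

lemma d_gen_single_add_single (i j : κ) :
    ∃ c : ℝ, c ≠ 0 ∧ D.d (P.gen (Finsupp.single i 1 + Finsupp.single j 1)) =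
      c • D.bracket (P.gen (Finsupp.single i 1)) (P.gen (Finsupp.single j 1)) := by
  set α : κ →₀ ℕ := Finsupp.single i 1 + Finsupp.single j 1 with hα
  set s := {p ∈ antidiagonal α | p.1 ≠ 0 ∧ p.2 ≠ 0} with hs
  have hterm : ∀ p ∈ s, D.bracket (P.gen p.1) (P.gen p.2) =
      D.bracket (P.gen (Finsupp.single i 1)) (P.gen (Finsupp.single j 1)) := by
    rintro ⟨β, γ⟩ hp
    simp only [hs, Finset.mem_filter, mem_antidiagonal] at hp
    obtain ⟨rfl, rfl⟩ | ⟨rfl, rfl⟩ := eq_single_of_add_eq_single_add_single hp.1 hp.2.1 hp.2.2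
    · rfl
    · exact P.bracket_gen_comm _ _
  have hzero : ∀ p ∈ antidiagonal α, D.bracket (P.gen p.1) (P.gen p.2) ≠ 0 →
      p.1 ≠ 0 ∧ p.2 ≠ 0 := by
    rintro ⟨β, γ⟩ - h
    constructor <;> rintro rfl <;> simp [P.gen_zero] at h
  refine ⟨1 / 2 * s.card, ?_, ?_⟩
  · have hmem : (Finsupp.single i 1, Finsupp.single j 1) ∈ s := by simp [hs, hα]
    exact mul_ne_zero (by norm_num) (Nat.cast_ne_zero.2 (Finset.card_ne_zero_of_mem hmem))
  · rw [P.d_gen, ← Finset.sum_filter_of_ne hzero, Finset.sum_congr rfl hterm, Finset.sum_const,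
      ← Nat.cast_smul_eq_nsmul ℝ, smul_smul]

lemma bracket_gen_single_mem_exact (i j : κ) :
    D.bracket (P.gen (Finsupp.single i 1)) (P.gen (Finsupp.single j 1)) ∈ D.exact (-2) := by
  obtain ⟨c, hc, hd⟩ := P.d_gen_single_add_single i j
  refine DGLA.mem_exact_of_d_eq
    (b := c⁻¹ • P.gen (Finsupp.single i 1 + Finsupp.single j 1)) ?_ ?_
  · have hgrade := P.gen_mem_grade (Finsupp.single i 1 + Finsupp.single j 1)
    rw [map_add, Finsupp.degree_single, Finsupp.degree_single] at hgrade
    exact Submodule.smul_mem _ _ hgrade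
  · rw [map_smul, hd, inv_smul_smul₀ hc]

lemma dynkin_word_mem_exact {w : List (Letter κ)} (hw : w.length = weight w) (hlen : 2 ≤ w.length) :
    P.dynkin (word ℝ w) ∈ D.exact (-w.length) := by
  induction w with
  | nil => simp at hlen
  | cons α w ih =>
    have hα := one_le_degree α
    have hle := length_le_weight w
    rw [weight_cons, List.length_cons] at hw
    obtain ⟨i, hi⟩ := exists_eq_single_of_degree_eq_one (α := α.1) (by lia)
    have hne : w ≠ [] := by
      rintro rfl
      simp at hlen
    rw [word_cons_letter, dynkin_letter_mul, algebraMapInv_eq_zero (word_mem_wordSpan hne),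
      zero_smul, add_zero, hi]
    match w, hne with
    | [β], _ =>
      have hβ := one_le_degree β
      rw [List.length_singleton, weight_cons, weight_nil] at hw
      obtain ⟨j, hj⟩ := exists_eq_single_of_degree_eq_one (α := β.1) (by lia)
      rw [word_cons_letter, word_nil, mul_one, dynkin_letter, map_smul, hj]
      exact Submodule.smul_mem _ _ (P.bracket_gen_single_mem_exact i j)
    | β :: γ :: w, _ =>
      have h := DGLA.bracket_mem_exact (P.gen_single_mem_closed i) (ih (by lia) (by simp))
      convert h using 2
      push_cast [List.length_cons]
      ring

lemma retract_word_mem {n : ℤ} {w : List (Letter κ)} (hw : cobarDegree w = n)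
    (hlen : w.length = weight w) :
    P.retract (word ℝ w) ∈ D.exact n ∨
      n = -1 ∧ ∃ i, P.retract (word ℝ w) = P.gen (Finsupp.single i 1) := by
  obtain rfl : n = -w.length := by
    rw [← hw, cobarDegree, ← hlen]
    ring
  match w with
  | [] => exact Or.inl (by simp [show P.retract 1 = 0 by simpa using P.retract_word []])
  | [α] =>
    have hα : α.1.degree = 1 := by simpa using hlen.symm
    obtain ⟨i, hi⟩ := exists_eq_single_of_degree_eq_one hα
    refine Or.inr ⟨rfl, i, ?_⟩
    rw [retract_word, ← hlen, word_cons_letter, word_nil, mul_one, dynkin_letter, hα, hi]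
    simp
  | α :: β :: w =>
    left
    rw [retract_word]
    exact Submodule.smul_mem _ _ (P.dynkin_word_mem_exact hlen (by simp))

lemma exists_sub_mem_exact_of_mem_closed [Finite κ] {n : ℤ} {a : D.carrier} (ha : a ∈ D.closed n) :
    ∃ t ∈ wordSpan ℝ {w : List (Letter κ) | cobarDegree w = n ∧ w.length = weight w},
      a - P.retract t ∈ D.exact n := by
  have hd : cobarD ℝ (P.toCobar a) = 0 := by
    rw [← toCobar_d, LinearMap.mem_ker.1 ha.2, map_zero]
  obtain ⟨t, ht, f, hf, h⟩ := exists_eq_add_cobarD (P.toCobar_mem_grade n a ha.1) hd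
  refine ⟨t, ht, DGLA.mem_exact_of_d_eq (P.retract_mem_grade hf) ?_⟩
  rw [← retract_cobarD, ← P.retract_toCobar a, h, map_add, add_sub_cancel_left]

theorem closed_le_exact [Finite κ] (P : MonomialPresentation κ D) {n : ℤ} (hn : n ≠ -1) :
    D.closed n ≤ D.exact n := by
  intro a ha
  obtain ⟨t, ht, hat⟩ := P.exists_sub_mem_exact_of_mem_closed ha
  have htn : P.retract t ∈ D.exact n := map_mem_of_mem_wordSpan
    (fun w hw => (P.retract_word_mem hw.1 hw.2).resolve_right fun h => hn h.1) ht
  simpa using Submodule.add_mem _ hat htn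

theorem exists_mem_span_sub_mem_exact [Finite κ] {a : D.carrier} (ha : a ∈ D.closed (-1)) :
    ∃ b ∈ Submodule.span ℝ (Set.range fun i => P.gen (Finsupp.single i 1)),
      a - b ∈ D.exact (-1) := by
  obtain ⟨t, ht, hat⟩ := P.exists_sub_mem_exact_of_mem_closed ha
  have htn : P.retract t ∈ Submodule.span ℝ (Set.range fun i => P.gen (Finsupp.single i 1)) ⊔
      D.exact (-1) := by
    refine map_mem_of_mem_wordSpan (fun w hw => ?_) ht
    rcases P.retract_word_mem hw.1 hw.2 with h | ⟨-, i, h⟩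
    · exact Submodule.mem_sup_right h
    · exact Submodule.mem_sup_left (h ▸ Submodule.subset_span ⟨i, rfl⟩)
  obtain ⟨b, hb, c, hc, hbc⟩ := Submodule.mem_sup.1 htn
  refine ⟨b, hb, ?_⟩
  have h := Submodule.add_mem _ hat hc
  rwa [← hbc, sub_add, add_sub_cancel_right] at h

theorem eq_zero_of_sum_smul_gen_mem_exact [Fintype κ] {c : κ → ℝ}
    (h : ∑ i, c i • P.gen (Finsupp.single i 1) ∈ D.exact (-1)) : c = 0 := by
  obtain ⟨-, b, -, hb⟩ := h
  have hcobar : ∑ i, c i • letter ℝ (Finsupp.single i 1) = cobarD ℝ (P.toCobar b) := by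
    rw [← toCobar_d, hb, map_sum]
    simp only [map_smul, P.toCobar_gen]
  have hone : ∑ i, c i • letter ℝ (Finsupp.single i 1) ∈
      wordSpan ℝ {w : List (Letter κ) | w.length = 1} :=
    Submodule.sum_mem _ fun i _ => Submodule.smul_mem _ _ (letter_mem_wordSpan fun _ => rfl)
  have hother : cobarD ℝ (P.toCobar b) ∈ wordSpan ℝ {w : List (Letter κ) | w.length ≠ 1} := by
    refine cobarD_mem_wordSpan (S := Set.univ) (fun w _ u hu hlen => ?_) (by simp)
    intro (h1 : u.length = 1)
    have hw : w = [] := List.length_eq_zero_iff.1 (by lia)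
    have hle := length_le_weight u
    rw [hu, hw, weight_nil] at hle
    lia
  have hzero : ∑ i, c i • letter ℝ (Finsupp.single i 1) = 0 := by
    have hboth := mem_wordSpan_inter hone (hcobar ▸ hother)
    rw [show {w : List (Letter κ) | w.length = 1} ∩ {w | w.length ≠ 1} = ∅ from
      Set.inter_compl_self _] at hboth
    simpa [wordSpan] using hboth
  exact funext (Fintype.linearIndependent_iff.1 linearIndependent_letter_single c hzero)

end MonomialPresentation

section DiagCoeff

variable {κ R V M : Type*} [Fintype κ] [DecidableEq κ] [CommSemiring R] [AddCommMonoid V]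
  [Module R V] [AddCommMonoid M] [Module R M] {n : ℕ} (e : Module.Basis κ R V)
  (μ : MultilinearMap R (fun _ : Fin n => V) M)

/-- The coefficient of `x^α` in the polynomial map `x ↦ μ (x, …, x)`. -/
def diagCoeff (α : κ →₀ ℕ) : M := ∑ f : Fin n → κ with multiIndex f = α, μ (e ∘ f)

lemma diagCoeff_eq_zero {α : κ →₀ ℕ} (hα : α.degree ≠ n) : diagCoeff e μ α = 0 := by
  rw [diagCoeff, Finset.sum_eq_zero]
  rintro f hf
  rw [Finset.mem_filter] at hf
  rw [← hf.2, degree_multiIndex] at hα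
  contradiction

lemma sum_pow_smul_diagCoeff (c : κ → R) :
    ∑ α ∈ Finset.univ.finsuppAntidiag n, (∏ i, c i ^ α i) • diagCoeff e μ α =
      μ fun _ => ∑ i, c i • e i := by
  have hmaps : ∀ f ∈ (Finset.univ : Finset (Fin n → κ)),
      multiIndex f ∈ Finset.univ.finsuppAntidiag n := fun f _ =>
    mem_finsuppAntidiag_univ.2 (degree_multiIndex f)
  rw [MultilinearMap.map_sum, ← Finset.sum_fiberwise_of_maps_to hmaps]
  refine Finset.sum_congr rfl fun α _ => ?_
  rw [diagCoeff, Finset.smul_sum]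
  refine Finset.sum_congr rfl fun f hf => ?_
  rw [← (Finset.mem_filter.1 hf).2, prod_pow_multiIndex, MultilinearMap.map_smul_univ]
  rfl

variable {e μ}

lemma diagCoeff_multiIndex (hμ : ∀ (v : Fin n → V) (σ : Equiv.Perm (Fin n)), μ (v ∘ σ) = μ v)
    (f : Fin n → κ) : diagCoeff e μ (multiIndex f) =
      Fintype.card {f' : Fin n → κ // multiIndex f' = multiIndex f} • μ (e ∘ f) := by
  rw [diagCoeff, Fintype.card_subtype]
  refine Finset.sum_eq_card_nsmul fun f' hf' => ?_
  obtain ⟨σ, rfl⟩ := exists_perm_of_multiIndex_eq (Finset.mem_filter.1 hf').2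
  exact hμ (e ∘ f) σ

lemma mem_of_diagCoeff_mem {K V M : Type*} [Field K] [CharZero K] [AddCommGroup V] [Module K V]
    [AddCommGroup M] [Module K M] {e : Module.Basis κ K V}
    {μ : MultilinearMap K (fun _ : Fin n => V) M}
    (hμ : ∀ (v : Fin n → V) (σ : Equiv.Perm (Fin n)), μ (v ∘ σ) = μ v)
    {p : Submodule K M} (hp : ∀ α, diagCoeff e μ α ∈ p) (v : Fin n → V) : μ v ∈ p := by
  suffices h : p.mkQ.compMultilinearMap μ = 0 by
    simpa using congrArg (fun ν : MultilinearMap K (fun _ : Fin n => V) (M ⧸ p) => ν v) h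
  refine Module.Basis.ext_multilinear (fun _ => e) fun f => ?_
  have h := hp (multiIndex f)
  rw [diagCoeff_multiIndex hμ, ← Nat.cast_smul_eq_nsmul K, Submodule.smul_mem_iff] at h
  · exact (Submodule.Quotient.mk_eq_zero p).2 h
  · have : Nonempty {f' : Fin n → κ // multiIndex f' = multiIndex f} := ⟨⟨f, rfl⟩⟩
    exact Nat.cast_ne_zero.2 Fintype.card_ne_zero

end DiagCoeff

section CobarGenerators

variable {κ V : Type*} [AddCommGroup V] [Module ℝ V] [Fintype κ] [DecidableEq κ]
  (e : Module.Basis κ ℝ V) {n : ℕ}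

/-- The linear map `x^α ↦ letter α`, divided by the number of ways of spelling `x^α` as a product of
variables. -/
def letterOfMonomial : MvPolynomial κ ℝ →ₗ[ℝ] Cobar ℝ κ :=
  (MvPolynomial.basisMonomials κ ℝ).constr ℝ fun α =>
    (Fintype.card {f : Fin α.degree → κ // multiIndex f = α} : ℝ)⁻¹ • letter ℝ α

/-- The generators of the cobar construction in the multilinear form in which `FreeSgPresentation`
expects them: `(v₁, …, vₙ)` is sent to the class of the polynomial `v₁ ⋯ vₙ`. -/
def multilinearLetter (n : ℕ) : MultilinearMap ℝ (fun _ : Fin n => V) (Cobar ℝ κ) :=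
  letterOfMonomial.compMultilinearMap
    ((MultilinearMap.mkPiAlgebra ℝ (Fin n) (MvPolynomial κ ℝ)).compLinearMap fun _ =>
      e.constr ℝ MvPolynomial.X)

lemma multilinearLetter_comp_perm (v : Fin n → V) (σ : Equiv.Perm (Fin n)) :
    multilinearLetter e n (v ∘ σ) = multilinearLetter e n v :=
  congrArg letterOfMonomial (Equiv.prod_comp σ fun j => e.constr ℝ MvPolynomial.X (v j))

lemma multilinearLetter_basis (f : Fin n → κ) : multilinearLetter e n (e ∘ f) =
    (Fintype.card {f' : Fin n → κ // multiIndex f' = multiIndex f} : ℝ)⁻¹ •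
      letter ℝ (multiIndex f) := by
  have hprod : ∏ j, e.constr ℝ MvPolynomial.X (e (f j)) =
      MvPolynomial.basisMonomials κ ℝ (multiIndex f) := by
    simp [multiIndex, MvPolynomial.monomial_sum_one, MvPolynomial.X]
  have hmul : multilinearLetter e n (e ∘ f) =
      letterOfMonomial (∏ j, e.constr ℝ MvPolynomial.X (e (f j))) := rfl
  rw [hmul, hprod, letterOfMonomial, Module.Basis.constr_basis, degree_multiIndex]

lemma diagCoeff_multilinearLetter {α : κ →₀ ℕ} (hα : α.degree = n) :
    diagCoeff e (multilinearLetter e n) α = letter ℝ α := by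
  obtain ⟨f, rfl⟩ := exists_multiIndex_eq hα
  have : Nonempty {f' : Fin n → κ // multiIndex f' = multiIndex f} := ⟨⟨f, rfl⟩⟩
  rw [diagCoeff_multiIndex (multilinearLetter_comp_perm e), multilinearLetter_basis,
    ← Nat.cast_smul_eq_nsmul ℝ, smul_inv_smul₀ (Nat.cast_ne_zero.2 Fintype.card_ne_zero)]

lemma multilinearLetter_mem_cobarGrade {κ : Type} [Fintype κ] [DecidableEq κ]
    (e : Module.Basis κ ℝ V) (v : Fin n → V) :
    multilinearLetter e n v ∈ cobarGrade κ (1 - 2 * n) := by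
  refine mem_of_diagCoeff_mem (e := e) (multilinearLetter_comp_perm e) (fun α => ?_) v
  by_cases hα : α.degree = n
  · rw [diagCoeff_multilinearLetter e hα, ← hα]
    exact letter_mem_cobarGrade α
  · rw [diagCoeff_eq_zero e _ hα]
    exact Submodule.zero_mem _

end CobarGenerators

end FreeLieCohomology

namespace FreeSgPresentation

open FreeLieCohomology
open Finset.HasAntidiagonal (antidiagonal mem_antidiagonal)

variable {g : Type} [LieRing g] [LieAlgebra ℝ g] {D : DGLA} (P : FreeSgPresentation g D)

/-- The generator `𝓘(x)` for `x` in the degree one part `g` of the symmetric algebra. -/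
def linearGen : g →ₗ[ℝ] D.carrier :=
  (MultilinearMap.ofSubsingleton ℝ g D.carrier (0 : Fin 1)).symm (P.J 0)

lemma linearGen_apply (x : g) : P.linearGen x = P.J 0 fun _ => x := rfl

variable {κ : Type} [Fintype κ] [DecidableEq κ] (e : Module.Basis κ ℝ g)

/-- The coefficient of `x^α` in the generating function `i(x)`, in the coordinates given by a
basis. -/
def gen (α : κ →₀ ℕ) : D.carrier := diagCoeff e (P.J (α.degree - 1)) α

lemma gen_zero : P.gen e 0 = 0 := diagCoeff_eq_zero e _ (by simp)

lemma gen_eq_diagCoeff {k : ℕ} {α : κ →₀ ℕ} (hα : α.degree = k + 1) :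
    P.gen e α = diagCoeff e (P.J k) α := by
  obtain rfl : k = α.degree - 1 := by lia
  rfl

lemma gen_single (i : κ) : P.gen e (Finsupp.single i 1) = P.linearGen (e i) := by
  rw [gen_eq_diagCoeff (k := 0) P e (by simp), diagCoeff, Finset.sum_eq_single fun _ => i]
  · rfl
  · intro f hf hne
    refine absurd (funext fun j => ?_) hne
    obtain rfl := Fin.fin_one_eq_zero j
    simpa [multiIndex, Finsupp.single_left_inj] using hf
  · simp [multiIndex]

lemma gen_mem_grade (α : κ →₀ ℕ) : P.gen e α ∈ D.grade (1 - 2 * α.degree) := by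
  rcases eq_or_ne α 0 with rfl | hα
  · rw [gen_zero]
    exact Submodule.zero_mem _
  · obtain ⟨k, hk⟩ := Nat.exists_eq_succ_of_ne_zero (mt (Finsupp.degree_eq_zero_iff α).1 hα)
    rw [gen_eq_diagCoeff P e hk, hk]
    exact Submodule.sum_mem _ fun f _ => by simpa using P.J_grade k (e ∘ f)

lemma sum_pow_smul_gen (c : κ → ℝ) (k : ℕ) :
    ∑ α ∈ Finset.univ.finsuppAntidiag (k + 1), (∏ i, c i ^ α i) • P.gen e α =
      P.J k fun _ => ∑ i, c i • e i := by
  rw [← sum_pow_smul_diagCoeff]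
  refine Finset.sum_congr rfl fun α hα => ?_
  rw [gen_eq_diagCoeff P e (mem_finsuppAntidiag_univ.1 hα)]

lemma sum_pow_smul_gen_zero (c : κ → ℝ) :
    ∑ α ∈ Finset.univ.finsuppAntidiag 0, (∏ i, c i ^ α i) • P.gen e α = 0 := by
  simp [gen_zero]

lemma d_sum_pow_smul_gen (c : κ → ℝ) (n : ℕ) :
    D.d (∑ α ∈ Finset.univ.finsuppAntidiag n, (∏ i, c i ^ α i) • P.gen e α) =
      (1 / 2 : ℝ) • ∑ p ∈ antidiagonal n,
        D.bracket (∑ β ∈ Finset.univ.finsuppAntidiag p.1, (∏ i, c i ^ β i) • P.gen e β)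
          (∑ γ ∈ Finset.univ.finsuppAntidiag p.2, (∏ i, c i ^ γ i) • P.gen e γ) := by
  match n with
  | 0 => simp [gen_zero]
  | 1 =>
    rw [sum_pow_smul_gen, P.d_J_one]
    simp [Finset.Nat.antidiagonal_succ, gen_zero]
  | k + 2 =>
    rw [sum_pow_smul_gen, P.d_J, Finset.Nat.antidiagonal_succ_succ', Finset.sum_cons,
      Finset.sum_cons, Finset.sum_map]
    simp only [sum_pow_smul_gen_zero, map_zero, LinearMap.zero_apply, zero_add,
      Function.Embedding.prodMap, Function.Embedding.coeFn_mk, Prod.map, Nat.succ_eq_add_one,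
      sum_pow_smul_gen]
    rw [Finset.Nat.sum_antidiagonal_eq_sum_range_succ_mk]

lemma bracket_sum_pow_smul_gen (c : κ → ℝ) (s t : Finset (κ →₀ ℕ)) :
    D.bracket (∑ β ∈ s, (∏ i, c i ^ β i) • P.gen e β) (∑ γ ∈ t, (∏ i, c i ^ γ i) • P.gen e γ) =
      ∑ β ∈ s, ∑ γ ∈ t, (∏ i, c i ^ (β + γ) i) • D.bracket (P.gen e β) (P.gen e γ) := by
  rw [LinearMap.map_sum₂]
  refine Finset.sum_congr rfl fun β _ => ?_
  simp only [map_sum, map_smul, LinearMap.smul_apply, smul_smul, Finsupp.add_apply, pow_add,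
    Finset.prod_mul_distrib, mul_comm]

lemma d_gen (α : κ →₀ ℕ) : D.d (P.gen e α) =
    (1 / 2 : ℝ) • ∑ p ∈ antidiagonal α, D.bracket (P.gen e p.1) (P.gen e p.2) := by
  refine eq_of_sum_pow_smul_eq (K := ℝ) (u := fun α => D.d (P.gen e α)) (v := fun α =>
    (1 / 2 : ℝ) • ∑ p ∈ antidiagonal α, D.bracket (P.gen e p.1) (P.gen e p.2)) (fun c => ?_)
    (mem_finsuppAntidiag_univ.2 (rfl : α.degree = _))
  have h := P.d_sum_pow_smul_gen e c α.degree
  simp only [bracket_sum_pow_smul_gen] at h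
  rw [sum_antidiagonal_finsuppAntidiag α.degree fun β γ =>
    (∏ i, c i ^ (β + γ) i) • D.bracket (P.gen e β) (P.gen e γ)] at h
  simp only [map_sum, map_smul] at h
  rw [h, Finset.smul_sum]
  refine Finset.sum_congr rfl fun β _ => ?_
  rw [smul_comm]
  congr 1
  rw [Finset.smul_sum]
  refine Finset.sum_congr rfl fun p hp => ?_
  rw [mem_antidiagonal.1 hp]

lemma lieSpan_gen : D.lieSpan (Set.range (P.gen e)) = ⊤ := by
  rw [eq_top_iff, ← P.generates]
  refine DGLA.lieSpan_le_lieSpan ?_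
  rintro _ ⟨k, v, rfl⟩
  refine mem_of_diagCoeff_mem (e := e) (P.J_symm k) (fun α => ?_) v
  by_cases hα : α.degree = k + 1
  · rw [← gen_eq_diagCoeff P e hα]
    exact DGLA.subset_lieSpan ⟨α, rfl⟩
  · rw [diagCoeff_eq_zero e _ hα]
    exact Submodule.zero_mem _

lemma exists_toCobar : ∃ φ : D.carrier →ₗ[ℝ] Cobar ℝ κ,
    (∀ a b, φ (D.bracket a b) = gradedCommutator (cobarGrade κ) (φ a) (φ b)) ∧
    (∀ n, ∀ a ∈ D.grade n, φ a ∈ cobarGrade κ n) ∧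
    ∀ k v, φ (P.J k v) = multilinearLetter e (k + 1) v :=
  (P.free (cobarDGLA κ) (fun k => multilinearLetter e (k + 1))
    (fun _ => multilinearLetter_comp_perm e)
    fun k v => by exact_mod_cast multilinearLetter_mem_cobarGrade e v).exists

theorem exists_monomialPresentation {κ : Type} [Finite κ] [DecidableEq κ]
    (e : Module.Basis κ ℝ g) :
    ∃ Q : MonomialPresentation κ D, ∀ i, Q.gen (Finsupp.single i 1) = P.linearGen (e i) := by
  cases nonempty_fintype κ
  obtain ⟨φ, hbracket, hgrade, hJ⟩ := P.exists_toCobar e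
  refine ⟨⟨P.gen e, P.gen_zero e, P.gen_mem_grade e, P.d_gen e, P.lieSpan_gen e, φ, hbracket,
    hgrade, fun α => ?_⟩, P.gen_single e⟩
  rcases eq_or_ne α 0 with rfl | hα
  · rw [gen_zero, map_zero, letter_zero]
  · obtain ⟨k, hk⟩ := Nat.exists_eq_succ_of_ne_zero (mt (Finsupp.degree_eq_zero_iff α).1 hα)
    rw [gen_eq_diagCoeff P e hk, ← diagCoeff_multilinearLetter e hk, diagCoeff, map_sum]
    exact Finset.sum_congr rfl fun f _ => hJ k _

end FreeSgPresentation

/-- Proposition `lemma`.  For a finite-dimensional real Lie algebra `g`,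
the cohomology of the free graded Lie algebra `𝓛(S⁺g)` with differential determined by
`d i(x) = [i(x), i(x)]/2` is concentrated in degree `−1`, where it is isomorphic to
`g = S¹g ⊂ S⁺g`: all generators `𝓘(x)`, `x ∈ g`, are closed; the induced linear map
`g → H^{−1}(𝓛(S⁺g))`, `x ↦ [𝓘(x)]`, is injective and surjective; and in every other
degree every closed element is exact. -/
theorem freeLie_cohomology (g : Type) [LieRing g] [LieAlgebra ℝ g] [FiniteDimensional ℝ g]
    (D : DGLA) (P : FreeSgPresentation g D) :
    (∀ x : g, D.d (P.J 0 (fun _ => x)) = 0) ∧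
    (∀ x : g, P.J 0 (fun _ => x) ∈ D.exact (-1) → x = 0) ∧
    (∀ a ∈ D.closed (-1), ∃ x : g, a - P.J 0 (fun _ => x) ∈ D.exact (-1)) ∧
    (∀ n : ℤ, n ≠ -1 → D.closed n ≤ D.exact n) := by
  let e := Module.finBasis ℝ g
  obtain ⟨Q, hQ⟩ := P.exists_monomialPresentation e
  have hJ (x : g) : P.linearGen x = ∑ i, e.repr x i • Q.gen (Finsupp.single i 1) := by
    simp only [hQ, ← map_smul, ← map_sum, e.sum_repr]
  refine ⟨P.d_J_one, fun x hx => ?_, fun a ha => ?_, fun n hn => Q.closed_le_exact hn⟩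
  · rw [← P.linearGen_apply, hJ] at hx
    exact e.repr.map_eq_zero_iff.1 (DFunLike.coe_injective (Q.eq_zero_of_sum_smul_gen_mem_exact hx))
  · obtain ⟨b, hb, hab⟩ := Q.exists_mem_span_sub_mem_exact ha
    obtain ⟨x, rfl⟩ : b ∈ LinearMap.range P.linearGen :=
      Submodule.span_le.2 (by rintro _ ⟨i, rfl⟩; exact ⟨e i, (hQ i).symm⟩) hb
    exact ⟨x, hab⟩
end
end
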